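/- Let U ⊆ ℂ be an open set whose boundary ∂U is a Jordan curve (a homeomorphic image of the circle) and U the bounded component of its complement. Then there exists a homeomorphism g : ℂ → ℂ with g(U) equal to the open unit disc 𝔻 and g(ℂ \ closure(U)) = ℂ \ closure(𝔻). -/

import Mathlib

open Set Filter Topology Metric Complex

namespace JS

/-- continuous logarithm of `f` on `K` -/
def HasLog (f : ℂ → ℂ) (K : Set ℂ) : Prop :=
  ∃ l : ℂ → ℂ, ContinuousOn l K ∧ ∀ z ∈ K, Complex.exp (l z) = f z

theorem exp_const {α : Type*} [TopologicalSpace α] {S : Set α} (hS : IsPreconnected S)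
    {g : α → ℂ} (hg : ContinuousOn g S) (h1 : ∀ x ∈ S, Complex.exp (g x) = 1)
    {x y : α} (hx : x ∈ S) (hy : y ∈ S) : g x = g y := by
  have hd : IsDiscrete (AddSubgroup.zmultiples (2 * Real.pi * I) : Set ℂ) :=
    ⟨NormedSpace.discreteTopology_zmultiples _⟩
  refine hS.constant_of_mapsTo hd hg ?_ hx hy
  intro z hz
  obtain ⟨n, hn⟩ := Complex.exp_eq_one_iff.1 (h1 z hz)
  exact ⟨n, by simp [hn]⟩

theorem isSimplyConnected_univ (X : Type*) [TopologicalSpace X] [SimplyConnectedSpace X] :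
    IsSimplyConnected (univ : Set X) := by
  have := (Homeomorph.Set.univ X).toHomotopyEquiv.simplyConnectedSpace
  exact this

theorem exists_log_of_real {g : ℝ → ℂ} (hg : Continuous g) (h0 : ∀ x, g x ≠ 0) :
    ∃ l : ℝ → ℂ, Continuous l ∧ ∀ x, Complex.exp (l x) = g x := by
  obtain ⟨f, hf, h⟩ := Complex.exists_continuousOn_eqOn_exp_comp (isSimplyConnected_univ ℝ)
    isOpen_univ hg.continuousOn (by rintro ⟨x, -, hx⟩; exact h0 x hx)
  exact ⟨f, continuousOn_univ.1 hf, fun x => h (mem_univ x)⟩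

theorem exists_log_of_complex {g : ℂ → ℂ} (hg : Continuous g) (h0 : ∀ x, g x ≠ 0) :
    ∃ l : ℂ → ℂ, Continuous l ∧ ∀ x, Complex.exp (l x) = g x := by
  obtain ⟨f, hf, h⟩ := Complex.exists_continuousOn_eqOn_exp_comp (isSimplyConnected_univ ℂ)
    isOpen_univ hg.continuousOn (by rintro ⟨x, -, hx⟩; exact h0 x hx)
  exact ⟨f, continuousOn_univ.1 hf, fun x => h (mem_univ x)⟩

/-- Key degree lemma. -/
theorem degree_zero {C : Set ℂ} (hC : IsOpen C) (hb : Bornology.IsBounded C) {a : ℂ} (ha : a ∈ C)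
    {n : ℤ} {l R : ℂ → ℂ} (hl : ContinuousOn l (frontier C)) (hR : ContinuousOn R (closure C))
    (hR0 : ∀ z ∈ closure C, R z ≠ 0)
    (heq : ∀ z ∈ frontier C, (z - a) ^ n = Complex.exp (l z) * R z) : n = 0 := by
  classical
  obtain ⟨L, hL⟩ := ContinuousMap.exists_restrict_eq isClosed_frontier
    ⟨(frontier C).domRestrict l, continuousOn_iff_continuous_domRestrict.1 hl⟩
  have hLl : ∀ z ∈ frontier C, L z = l z := fun z hz => by
    have := DFunLike.congr_fun hL ⟨z, hz⟩
    simpa using this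
  let F : ℂ → ℂ := C.piecewise (fun z => Complex.exp (L z) * R z) (fun z => (z - a) ^ n)
  have hF : Continuous F := by
    apply continuous_piecewise
    · intro z hz; rw [heq z hz, hLl z hz]
    · exact (Complex.continuous_exp.comp L.continuous).continuousOn.mul hR
    · rw [hC.isClosed_compl.closure_eq]
      apply ContinuousOn.zpow₀ (by fun_prop)
      intro z hz
      left
      rw [sub_ne_zero]; rintro rfl; exact hz ha
  have hF0 : ∀ z, F z ≠ 0 := by
    intro z
    by_cases hz : z ∈ C
    · simp only [F, piecewise_eq_of_mem _ _ _ hz]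
      exact mul_ne_zero (Complex.exp_ne_zero _) (hR0 z (subset_closure hz))
    · simp only [F, piecewise_eq_of_notMem _ _ _ hz]
      apply zpow_ne_zero
      rw [sub_ne_zero]; rintro rfl; exact hz ha
  obtain ⟨m, hm, hmF⟩ := exists_log_of_complex hF hF0
  obtain ⟨r, hr⟩ := hb.subset_ball a
  have hr0 : 0 < r := by
    have := hr ha
    simpa using this
  have hout : ∀ θ : ℝ, F (a + r * Complex.exp (θ * I)) = (r * Complex.exp (θ * I)) ^ n := by
    intro θ
    have : a + r * Complex.exp (θ * I) ∉ C := fun h => by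
      have := hr h
      simp [Complex.norm_exp_ofReal_mul_I, abs_of_pos hr0] at this
    simp only [F, piecewise_eq_of_notMem _ _ _ this]
    simp
  let g : ℝ → ℂ := fun θ => m (a + r * Complex.exp (θ * I)) - n * (Real.log r + θ * I)
  have hg : Continuous g := by fun_prop
  have hg1 : ∀ θ ∈ (univ : Set ℝ), Complex.exp (g θ) = 1 := by
    intro θ _
    simp only [g]
    rw [Complex.exp_sub, hmF, hout, Complex.exp_int_mul, Complex.exp_add, ← Complex.ofReal_exp,
      Real.exp_log hr0]
    apply div_self
    apply zpow_ne_zero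
    exact mul_ne_zero (by exact_mod_cast hr0.ne') (Complex.exp_ne_zero _)
  have := exp_const isPreconnected_univ hg.continuousOn hg1 (mem_univ 0) (mem_univ (2 * Real.pi))
  simp only [g] at this
  have e1 : Complex.exp (((2 * Real.pi : ℝ) : ℂ) * I) = 1 := by
    push_cast; exact Complex.exp_two_pi_mul_I
  rw [e1] at this
  simp [Real.pi_ne_zero] at this
  exact this

end JS


namespace JS

theorem HasLog.mono {f : ℂ → ℂ} {K K' : Set ℂ} (h : HasLog f K) (hK : K' ⊆ K) : HasLog f K' := by
  obtain ⟨l, hl, h⟩ := h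
  exact ⟨l, hl.mono hK, fun z hz => h z (hK hz)⟩

theorem HasLog.congr {f g : ℂ → ℂ} {K : Set ℂ} (h : HasLog f K) (hfg : ∀ z ∈ K, f z = g z) :
    HasLog g K := by
  obtain ⟨l, hl, h⟩ := h
  exact ⟨l, hl, fun z hz => (h z hz).trans (hfg z hz)⟩

theorem HasLog.mul {f g : ℂ → ℂ} {K : Set ℂ} (hf : HasLog f K) (hg : HasLog g K) :
    HasLog (fun z => f z * g z) K := by
  obtain ⟨l, hl, h⟩ := hf
  obtain ⟨l', hl', h'⟩ := hg
  exact ⟨fun z => l z + l' z, hl.add hl', fun z hz => by rw [Complex.exp_add, h z hz, h' z hz]⟩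

theorem HasLog.inv {f : ℂ → ℂ} {K : Set ℂ} (hf : HasLog f K) :
    HasLog (fun z => (f z)⁻¹) K := by
  obtain ⟨l, hl, h⟩ := hf
  exact ⟨fun z => - l z, hl.neg, fun z hz => by rw [Complex.exp_neg, h z hz]⟩

theorem HasLog.zpow {f : ℂ → ℂ} {K : Set ℂ} (hf : HasLog f K) (n : ℤ) :
    HasLog (fun z => (f z) ^ n) K := by
  obtain ⟨l, hl, h⟩ := hf
  exact ⟨fun z => n * l z, continuousOn_const.mul hl, fun z hz => by
    rw [Complex.exp_int_mul, h z hz]⟩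

theorem HasLog.of_slit {f : ℂ → ℂ} {K : Set ℂ} (hf : ContinuousOn f K)
    (h : ∀ z ∈ K, f z ∈ slitPlane) : HasLog f K :=
  ⟨fun z => Complex.log (f z), hf.clog h, fun z hz => Complex.exp_log (slitPlane_ne_zero (h z hz))⟩

theorem HasLog.ne_zero {f : ℂ → ℂ} {K : Set ℂ} (hf : HasLog f K) {z : ℂ} (hz : z ∈ K) :
    f z ≠ 0 := by
  obtain ⟨l, _, h⟩ := hf
  rw [← h z hz]; exact Complex.exp_ne_zero _

theorem continuousOn_glue {l₁ l₂ : ℂ → ℂ} {K₁ K₂ : Set ℂ} (h₁ : ContinuousOn l₁ K₁)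
    (h₂ : ContinuousOn l₂ K₂) (c₁ : IsClosed K₁) (c₂ : IsClosed K₂)
    (h : ∀ z ∈ K₁ ∩ K₂, l₁ z = l₂ z) :
    ∃ l : ℂ → ℂ, ContinuousOn l (K₁ ∪ K₂) ∧ (∀ z ∈ K₁, l z = l₁ z) ∧ (∀ z ∈ K₂, l z = l₂ z) := by
  classical
  have e1 : ∀ z ∈ K₁, K₁.piecewise l₁ l₂ z = l₁ z := fun z hz => piecewise_eq_of_mem _ _ _ hz
  have e2 : ∀ z ∈ K₂, K₁.piecewise l₁ l₂ z = l₂ z := fun z hz => by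
    by_cases h1 : z ∈ K₁
    · rw [e1 z h1, h z ⟨h1, hz⟩]
    · exact piecewise_eq_of_notMem _ _ _ h1
  exact ⟨K₁.piecewise l₁ l₂, (h₁.congr e1).union_of_isClosed (h₂.congr e2) c₁ c₂, e1, e2⟩

theorem HasLog.union {f : ℂ → ℂ} {K₁ K₂ : Set ℂ} (h₁ : HasLog f K₁) (h₂ : HasLog f K₂)
    (c₁ : IsClosed K₁) (c₂ : IsClosed K₂) (hc : IsPreconnected (K₁ ∩ K₂)) :
    HasLog f (K₁ ∪ K₂) := by
  obtain ⟨l₁, hl₁, e₁⟩ := h₁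
  obtain ⟨l₂, hl₂, e₂⟩ := h₂
  obtain ⟨k, hk1, hk⟩ : ∃ k : ℂ, Complex.exp k = 1 ∧ ∀ z ∈ K₁ ∩ K₂, l₁ z = l₂ z + k := by
    rcases (K₁ ∩ K₂).eq_empty_or_nonempty with h | ⟨p, hp⟩
    · exact ⟨0, Complex.exp_zero, by simp [h]⟩
    · have h1 : ∀ z ∈ K₁ ∩ K₂, Complex.exp (l₁ z - l₂ z) = 1 := fun z hz => by
        rw [Complex.exp_sub, e₁ z hz.1, e₂ z hz.2, div_self]
        rw [← e₁ z hz.1]; exact Complex.exp_ne_zero _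
      refine ⟨l₁ p - l₂ p, h1 p hp, fun z hz => ?_⟩
      have := exp_const hc ((hl₁.mono inter_subset_left).sub (hl₂.mono inter_subset_right)) h1 hz hp
      simp only [Pi.sub_apply] at this
      rw [← this]; ring
  obtain ⟨l, hl, h1, h2⟩ := continuousOn_glue hl₁ (l₂ := fun z => l₂ z + k)
    (hl₂.add continuousOn_const) c₁ c₂ hk
  refine ⟨l, hl, ?_⟩
  rintro z (hz | hz)
  · rw [h1 z hz, e₁ z hz]
  · rw [h2 z hz, Complex.exp_add, hk1, mul_one, e₂ z hz]

theorem hasLog_of_same {K : Set ℂ} (hK : IsClosed K) {S : Set ℂ} (hS : IsPreconnected S)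
    (hSK : S ⊆ Kᶜ) {a b : ℂ} (ha : a ∈ S) (hb : b ∈ S) :
    HasLog (fun z => (z - a) / (z - b)) K := by
  refine hS.induction₂ (fun a b => HasLog (fun z => (z - a) / (z - b)) K) ?_ ?_ ?_ ha hb
  · intro x hx
    apply mem_nhdsWithin_of_mem_nhds
    obtain ⟨d, hd, hdK⟩ := Metric.isOpen_iff.1 hK.isOpen_compl x (hSK hx)
    filter_upwards [ball_mem_nhds x (half_pos hd)] with y hy
    have hyK : ∀ z ∈ K, d / 2 ≤ ‖z - y‖ := by
      intro z hz
      by_contra! h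
      have : z ∈ ball x d := by
        rw [mem_ball, dist_eq] at *
        calc ‖z - x‖ ≤ ‖z - y‖ + ‖y - x‖ := by
              have := norm_add_le (z - y) (y - x); simpa using this
          _ < d := by linarith
      exact hdK this hz
    have hne : ∀ z ∈ K, z - y ≠ 0 := fun z hz h => by
      have := hyK z hz
      rw [h, norm_zero] at this; linarith
    apply HasLog.of_slit
    · exact ContinuousOn.div (by fun_prop) (by fun_prop) hne
    · intro z hz
      have : (z - x) / (z - y) = 1 + (y - x) / (z - y) := by
        field_simp [hne z hz]; ring
      rw [this]
      apply mem_slitPlane_of_norm_lt_one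
      rw [norm_div, div_lt_one (norm_pos_iff.2 (hne z hz))]
      rw [mem_ball, dist_eq] at hy
      exact hy.trans_le (hyK z hz)
  · intro x y w hx hy hw h1 h2
    refine (h1.mul h2).congr fun z hz => ?_
    have : z - y ≠ 0 := sub_ne_zero.2 (by rintro rfl; exact hSK hy hz)
    by_cases hw' : z - w = 0
    · simp [hw']
    field_simp
  · intro x y hx hy h
    refine h.inv.congr fun z hz => ?_
    rw [inv_div]

theorem isPreconnected_compl_closedBall (R : ℝ) :
    IsPreconnected ((closedBall (0 : ℂ) R)ᶜ) := by
  have h : (closedBall (0 : ℂ) R)ᶜ =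
      (fun p : ℝ × ℝ => (p.1 : ℂ) * Complex.exp (p.2 * I)) '' (Ioi R ×ˢ univ) := by
    ext z
    simp only [mem_compl_iff, mem_closedBall, dist_zero_right, not_le, mem_image, mem_prod, mem_Ioi,
      mem_univ, and_true, Prod.exists]
    constructor
    · intro h
      exact ⟨‖z‖, Complex.arg z, h, Complex.norm_mul_exp_arg_mul_I z⟩
    · rintro ⟨r, θ, hr, rfl⟩
      rw [norm_mul, Complex.norm_exp_ofReal_mul_I, Complex.norm_real, Real.norm_eq_abs, mul_one]
      exact hr.trans_le (le_abs_self r)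
  rw [h]
  exact (isPreconnected_Ioi.prod isPreconnected_univ).image _ (by fun_prop)

/-- frontier of a component of an open set is disjoint from the set -/
theorem frontier_component_subset {F : Set ℂ} (hF : IsOpen F) (a : ℂ) :
    frontier (connectedComponentIn F a) ⊆ Fᶜ := by
  intro z hz hzF
  have ho : IsOpen (connectedComponentIn F a) := hF.connectedComponentIn
  have ho' : IsOpen (connectedComponentIn F z) := hF.connectedComponentIn
  rw [ho.frontier_eq] at hz
  obtain ⟨w, hw, hw'⟩ := mem_closure_iff.1 hz.1 _ ho' (mem_connectedComponentIn hzF)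
  apply hz.2
  rw [connectedComponentIn_eq hw', ← connectedComponentIn_eq hw]
  exact mem_connectedComponentIn hzF

theorem unbounded_component_unique {K : Set ℂ} (hK : Bornology.IsBounded K) {a b : ℂ}
    (ha : ¬ Bornology.IsBounded (connectedComponentIn Kᶜ a))
    (hb : ¬ Bornology.IsBounded (connectedComponentIn Kᶜ b)) :
    connectedComponentIn Kᶜ a = connectedComponentIn Kᶜ b := by
  obtain ⟨R, hR⟩ := hK.subset_closedBall 0
  have key : ∀ c : ℂ, ¬ Bornology.IsBounded (connectedComponentIn Kᶜ c) →
      (closedBall (0 : ℂ) (max R 0))ᶜ ⊆ connectedComponentIn Kᶜ c := by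
    intro c hc
    have : ¬ (connectedComponentIn Kᶜ c ⊆ closedBall 0 (max R 0)) := fun h =>
      hc (isBounded_closedBall.subset h)
    obtain ⟨z, hz, hz'⟩ := not_subset.1 this
    rw [connectedComponentIn_eq hz]
    apply (isPreconnected_compl_closedBall (max R 0)).subset_connectedComponentIn
      hz'
    exact compl_subset_compl.2 (hR.trans (closedBall_subset_closedBall (le_max_left _ _)))
  have hz : (((max R 0) + 1 : ℝ) : ℂ) ∈ (closedBall (0 : ℂ) (max R 0))ᶜ := by
    rw [mem_compl_iff, mem_closedBall, dist_zero_right, Complex.norm_real, Real.norm_eq_abs, not_le]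
    exact (lt_add_one _).trans_le (le_abs_self _)
  rw [connectedComponentIn_eq (key a ha hz), connectedComponentIn_eq (key b hb hz)]

theorem same_of_hasLog_aux {K : Set ℂ} (hK : IsClosed K) {a b : ℂ} (ha : a ∉ K) (hb : b ∉ K)
    (h : HasLog (fun z => (z - a) / (z - b)) K)
    (hbd : Bornology.IsBounded (connectedComponentIn Kᶜ a)) : b ∈ connectedComponentIn Kᶜ a := by
  by_contra hbC
  have hfr := frontier_component_subset hK.isOpen_compl a
  rw [compl_compl] at hfr
  obtain ⟨l, hl, e⟩ := h
  have hcl : ∀ z ∈ closure (connectedComponentIn Kᶜ a), z - b ≠ 0 := by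
    intro z hz h0
    obtain rfl := sub_eq_zero.1 h0
    rw [closure_eq_self_union_frontier] at hz
    exact hz.elim hbC (fun h => hb (hfr h))
  have := degree_zero (hK.isOpen_compl.connectedComponentIn) hbd (mem_connectedComponentIn ha)
    (n := 1) (l := l) (R := fun z => z - b) (hl.mono hfr) (by fun_prop) hcl
    (fun z hz => by
      rw [e z (hfr hz), zpow_one, div_mul_cancel₀ _ (hcl z (frontier_subset_closure hz))])
  exact one_ne_zero this

theorem same_of_hasLog {K : Set ℂ} (hK : IsCompact K) {a b : ℂ} (ha : a ∉ K) (hb : b ∉ K)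
    (h : HasLog (fun z => (z - a) / (z - b)) K) : b ∈ connectedComponentIn Kᶜ a := by
  by_cases h1 : Bornology.IsBounded (connectedComponentIn Kᶜ a)
  · exact same_of_hasLog_aux hK.isClosed ha hb h h1
  by_cases h2 : Bornology.IsBounded (connectedComponentIn Kᶜ b)
  · have := same_of_hasLog_aux hK.isClosed hb ha (h.inv.congr fun z _ => by rw [inv_div]) h2
    rw [← connectedComponentIn_eq this]
    exact mem_connectedComponentIn hb
  · rw [unbounded_component_unique hK.isBounded h1 h2]
    exact mem_connectedComponentIn hb

/-- Theorem of Janiszewski -/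
theorem janiszewski {K₁ K₂ : Set ℂ} (h₁ : IsCompact K₁) (h₂ : IsCompact K₂)
    (hc : IsPreconnected (K₁ ∩ K₂)) {a b : ℂ}
    (hb1 : b ∈ connectedComponentIn K₁ᶜ a) (hb2 : b ∈ connectedComponentIn K₂ᶜ a) :
    b ∈ connectedComponentIn (K₁ ∪ K₂)ᶜ a := by
  have ha1 : a ∈ K₁ᶜ := connectedComponentIn_nonempty_iff.1 ⟨b, hb1⟩
  have ha2 : a ∈ K₂ᶜ := connectedComponentIn_nonempty_iff.1 ⟨b, hb2⟩
  have l1 := hasLog_of_same h₁.isClosed isPreconnected_connectedComponentIn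
    (connectedComponentIn_subset _ _) (mem_connectedComponentIn ha1) hb1
  have l2 := hasLog_of_same h₂.isClosed isPreconnected_connectedComponentIn
    (connectedComponentIn_subset _ _) (mem_connectedComponentIn ha2) hb2
  apply same_of_hasLog (h₁.union h₂)
  · rintro (h | h); exacts [ha1 h, ha2 h]
  · rintro (h | h)
    exacts [connectedComponentIn_subset _ _ hb1 h, connectedComponentIn_subset _ _ hb2 h]
  · exact l1.union l2 h₁.isClosed h₂.isClosed hc

end JS


namespace JS

/-- compact sets with connected complement -/
def Full (K : Set ℂ) : Prop := IsCompact K ∧ IsPreconnected Kᶜ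

theorem Full.inter {K H : Set ℂ} (hK : Full K) (hH : IsOpen H) (hc : IsPreconnected H)
    (hb : ¬ Bornology.IsBounded H) : Full (K ∩ Hᶜ) := by
  refine ⟨hK.1.inter_right hH.isClosed_compl, ?_⟩
  rw [compl_inter, compl_compl]
  have : ¬ H ⊆ K := fun h => hb (hK.1.isBounded.subset h)
  obtain ⟨x, hx, hx'⟩ := not_subset.1 this
  exact hK.2.union x hx' hx hc

theorem not_bounded_of_ray {H : Set ℂ} (v : ℂ) (hv : ‖v‖ = 1) (t : ℝ)
    (h : ∀ s : ℝ, t < s → (s : ℂ) * v ∈ H) : ¬ Bornology.IsBounded H := by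
  intro hb
  obtain ⟨R, hR⟩ := hb.subset_closedBall 0
  have := hR (h (max (t + 1) (R + 1)) (lt_of_lt_of_le (lt_add_one t) (le_max_left _ _)))
  rw [mem_closedBall, dist_zero_right, norm_mul, hv, mul_one, Complex.norm_real,
    Real.norm_eq_abs] at this
  have h2 := (le_abs_self _).trans this
  have h3 := le_max_right (t + 1) (R + 1)
  linarith

theorem Full.re_le {K : Set ℂ} (hK : Full K) (t : ℝ) : Full (K ∩ {z | z.re ≤ t}) := by
  have := hK.inter (H := {z | t < z.re}) (isOpen_lt continuous_const Complex.continuous_re)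
    (convex_halfSpace_re_gt t).isPreconnected
    (not_bounded_of_ray 1 (by simp) t (by simp))
  convert this using 2
  ext z; simp

theorem Full.re_ge {K : Set ℂ} (hK : Full K) (t : ℝ) : Full (K ∩ {z | t ≤ z.re}) := by
  have := hK.inter (H := {z | z.re < t}) (isOpen_lt Complex.continuous_re continuous_const)
    (convex_halfSpace_re_lt t).isPreconnected
    (not_bounded_of_ray (-1) (by simp) (-t) (by intro s hs; simp; linarith))
  convert this using 2
  ext z; simp

theorem Full.im_le {K : Set ℂ} (hK : Full K) (t : ℝ) : Full (K ∩ {z | z.im ≤ t}) := by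
  have := hK.inter (H := {z | t < z.im}) (isOpen_lt continuous_const Complex.continuous_im)
    (convex_halfSpace_im_gt t).isPreconnected
    (not_bounded_of_ray I (by simp) t (by simp))
  convert this using 2
  ext z; simp

theorem Full.im_ge {K : Set ℂ} (hK : Full K) (t : ℝ) : Full (K ∩ {z | t ≤ z.im}) := by
  have := hK.inter (H := {z | z.im < t}) (isOpen_lt Complex.continuous_im continuous_const)
    (convex_halfSpace_im_lt t).isPreconnected
    (not_bounded_of_ray (-I) (by simp) (-t) (by intro s hs; simp; linarith))
  convert this using 2
  ext z; simp

theorem Full.hasLog_sub {K : Set ℂ} (hK : Full K) {c : ℂ} (hc : c ∉ K) :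
    HasLog (fun z => z - c) K := by
  obtain ⟨R, hR⟩ := hK.1.isBounded.subset_closedBall 0
  have hre : ∀ z ∈ K, 0 < (z - ((-(R + 1) : ℝ) : ℂ)).re := by
    intro z hz
    have h1 := hR hz
    rw [mem_closedBall, dist_zero_right] at h1
    have h2 := (abs_le.1 ((Complex.abs_re_le_norm z).trans h1)).1
    rw [Complex.sub_re, Complex.ofReal_re]; linarith
  have hb : ((-(R + 1) : ℝ) : ℂ) ∉ K := fun h => by
    have := hre _ h
    simp at this
  have h1 := hasLog_of_same hK.1.isClosed hK.2 subset_rfl hc hb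
  have h2 : HasLog (fun z => z - ((-(R + 1) : ℝ) : ℂ)) K :=
    HasLog.of_slit (by fun_prop) (fun z hz => Or.inl (hre z hz))
  exact (h1.mul h2).congr fun z hz => div_mul_cancel₀ _ (h2.ne_zero hz)

theorem eq_of_exp_one {w : ℂ} (h : Complex.exp w = 1) (hw : ‖w‖ < 1) : w = 0 := by
  obtain ⟨n, hn⟩ := Complex.exp_eq_one_iff.1 h
  by_cases h0 : n = 0
  · simpa [h0] using hn
  exfalso
  have h1 : (1 : ℝ) ≤ |(n : ℝ)| := by exact_mod_cast Int.one_le_abs h0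
  have h2 : ‖w‖ = |(n : ℝ)| * (2 * Real.pi) := by
    rw [hn]; simp [abs_of_pos Real.pi_pos]
  have := Real.pi_gt_three
  nlinarith

/-- step function at a gap point -/
theorem step_exists {K : Set ℂ} (hK : Full K) {c : ℂ} (hc : c ∉ K) :
    ∃ μ₁ μ₂ : ℂ → ℂ, ContinuousOn μ₁ (K ∩ {z | z.re ≤ c.re}) ∧
      ContinuousOn μ₂ (K ∩ {z | c.re ≤ z.re}) ∧
      (∀ z ∈ K ∩ {z | z.re ≤ c.re}, Complex.exp (μ₁ z) = 1) ∧
      (∀ z ∈ K ∩ {z | c.re ≤ z.re}, Complex.exp (μ₂ z) = 1) ∧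
      (∀ z, z.re = c.re → z.im < c.im → μ₁ z - μ₂ z = 0) ∧
      (∀ z, z.re = c.re → c.im < z.im → μ₁ z - μ₂ z = - (2 * Real.pi * I)) := by
  obtain ⟨l, hl, e⟩ := hK.hasLog_sub hc
  have hne : ∀ z ∈ K, z - c ≠ 0 := fun z hz h => hc (by rwa [← sub_eq_zero.1 h])
  refine ⟨fun z => Complex.log (-(z - c)) - Real.pi * I - l z, fun z => Complex.log (z - c) - l z,
    ?_, ?_, ?_, ?_, ?_, ?_⟩
  · refine ((ContinuousOn.clog (by fun_prop) ?_).sub continuousOn_const).sub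
      (hl.mono inter_subset_left)
    rintro z ⟨hz, hz'⟩
    rw [mem_slitPlane_iff]
    by_contra! h
    apply hne z hz
    simp only [neg_sub, sub_re, sub_im, mem_setOf_eq] at *
    apply Complex.ext <;> simp <;> linarith
  · refine (ContinuousOn.clog (by fun_prop) ?_).sub (hl.mono inter_subset_left)
    rintro z ⟨hz, hz'⟩
    rw [mem_slitPlane_iff]
    by_contra! h
    apply hne z hz
    simp only [sub_re, sub_im, mem_setOf_eq] at *
    apply Complex.ext <;> simp <;> linarith
  · rintro z ⟨hz, -⟩
    rw [Complex.exp_sub, Complex.exp_sub, e z hz, Complex.exp_log (neg_ne_zero.2 (hne z hz)),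
      Complex.exp_pi_mul_I]
    field_simp [hne z hz]
  · rintro z ⟨hz, -⟩
    rw [Complex.exp_sub, e z hz, Complex.exp_log (hne z hz), div_self (hne z hz)]
  · intro z h1 h2
    simp only [Complex.log, norm_neg]
    rw [Complex.arg_neg_eq_arg_add_pi_of_im_neg (by simpa using h2)]
    push_cast; ring
  · intro z h1 h2
    simp only [Complex.log, norm_neg]
    rw [Complex.arg_neg_eq_arg_sub_pi_of_im_pos (by simpa using h2)]
    push_cast; ring

theorem glue_re {K : Set ℂ} (hK : Full K) {f : ℂ → ℂ} (t : ℝ)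
    (h₁ : HasLog f (K ∩ {z | z.re ≤ t})) (h₂ : HasLog f (K ∩ {z | t ≤ z.re})) : HasLog f K := by
  obtain ⟨p₁, hp₁, e₁⟩ := h₁
  obtain ⟨p₂, hp₂, e₂⟩ := h₂
  set X := K ∩ {z | z.re ≤ t} with hX
  set Y := K ∩ {z | t ≤ z.re} with hY
  set d : ℂ → ℂ := fun z => p₁ z - p₂ z with hd
  set L := K ∩ {z | z.re = t} with hL
  have hLX : L ⊆ X := fun z hz => ⟨hz.1, le_of_eq hz.2⟩
  have hLY : L ⊆ Y := fun z hz => ⟨hz.1, ge_of_eq hz.2⟩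
  have hLc : IsCompact L := hK.1.inter_right (isClosed_eq Complex.continuous_re continuous_const)
  have hXc : IsClosed X := (hK.re_le t).1.isClosed
  have hYc : IsClosed Y := (hK.re_ge t).1.isClosed
  have hdc : ContinuousOn d L := (hp₁.mono hLX).sub (hp₂.mono hLY)
  have hde : ∀ z ∈ L, Complex.exp (d z) = 1 := fun z hz => by
    rw [hd, Complex.exp_sub, e₁ z (hLX hz), e₂ z (hLY hz), div_self]
    rw [← e₁ z (hLX hz)]; exact Complex.exp_ne_zero _
  obtain ⟨δ, hδ, hu⟩ := Metric.uniformContinuousOn_iff.1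
    (hLc.uniformContinuousOn_of_continuous hdc) 1 one_pos
  have hloc : ∀ z ∈ L, ∀ w ∈ L, |z.im - w.im| < δ → d z = d w := by
    intro z hz w hw h
    have h1 : dist z w < δ := by
      rw [Complex.dist_of_re_eq (hz.2.trans hw.2.symm), Real.dist_eq]; exact h
    have h2 := hu z hz w hw h1
    rw [dist_eq] at h2
    exact sub_eq_zero.1 (eq_of_exp_one (by rw [Complex.exp_sub, hde z hz, hde w hw, div_one]) h2)
  obtain ⟨R, hR⟩ := hLc.isBounded.subset_closedBall 0
  have him : ∀ z ∈ L, |z.im| ≤ R := fun z hz => by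
    have := hR hz
    rw [mem_closedBall, dist_zero_right] at this
    exact (Complex.abs_im_le_norm z).trans this
  set η := δ / 2 with hη
  have hη0 : 0 < η := half_pos hδ
  have main : ∀ n : ℕ, ∃ l₁ l₂ : ℂ → ℂ, ∃ k : ℂ, ContinuousOn l₁ X ∧ ContinuousOn l₂ Y ∧
      (∀ z ∈ X, Complex.exp (l₁ z) = f z) ∧ (∀ z ∈ Y, Complex.exp (l₂ z) = f z) ∧
      (∀ z ∈ L, z.im ≤ -R - 1 + n * η → l₁ z = l₂ z) ∧
      (∀ z ∈ L, -R - 1 + n * η - η < z.im → l₁ z - l₂ z = d z + k) := by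
    intro n
    induction n with
    | zero =>
      refine ⟨p₁, p₂, 0, hp₁, hp₂, e₁, e₂, ?_, ?_⟩
      · intro z hz h
        have := (abs_le.1 (him z hz)).1
        simp at h; linarith
      · intro z hz h
        simp [hd]
    | succ n ih =>
      obtain ⟨l₁, l₂, k, c₁, c₂, q₁, q₂, hag, hk⟩ := ih
      set s := -R - 1 + n * η with hs
      have hs' : -R - 1 + ((n + 1 : ℕ) : ℝ) * η = s + η := by push_cast; rw [hs]; ring
      rw [hs']
      by_cases hp : ∃ p ∈ L, s - η < p.im ∧ p.im ≤ s
      · obtain ⟨p, hpL, hp1, hp2⟩ := hp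
        refine ⟨l₁, l₂, k, c₁, c₂, q₁, q₂, ?_, fun z hz h => hk z hz (by linarith)⟩
        intro z hz h
        rcases le_or_gt z.im s with h' | h'
        · exact hag z hz h'
        · have a1 := hk z hz (by linarith)
          have a2 := hk p hpL hp1
          have a3 := hloc z hz p hpL (by rw [abs_lt]; constructor <;> linarith)
          rw [hag p hpL hp2, sub_self] at a2
          rw [a3, ← a2] at a1
          exact sub_eq_zero.1 a1
      push Not at hp
      by_cases hw : ∃ w ∈ L, s < w.im ∧ w.im ≤ s + η
      · obtain ⟨w, hwL, hw1, hw2⟩ := hw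
        obtain ⟨j, hj⟩ : ∃ j : ℤ, l₁ w - l₂ w = j * (2 * Real.pi * I) := by
          apply Complex.exp_eq_one_iff.1
          rw [Complex.exp_sub, q₁ w (hLX hwL), q₂ w (hLY hwL), div_self]
          rw [← q₁ w (hLX hwL)]; exact Complex.exp_ne_zero _
        have hcK : (⟨t, s - η / 2⟩ : ℂ) ∉ K := fun h => by
          have := hp ⟨t, s - η / 2⟩ ⟨h, rfl⟩ (by simp; linarith)
          simp at this; linarith
        obtain ⟨μ₁, μ₂, m₁, m₂, o₁, o₂, b1, b2⟩ := step_exists hK hcK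
        simp only at m₁ m₂ o₁ o₂ b1 b2
        refine ⟨fun z => l₁ z + j * μ₁ z, fun z => l₂ z + j * μ₂ z, k - j * (2 * Real.pi * I),
          c₁.add (continuousOn_const.mul m₁), c₂.add (continuousOn_const.mul m₂), ?_, ?_, ?_, ?_⟩
        · intro z hz
          rw [Complex.exp_add, q₁ z hz, Complex.exp_int_mul, o₁ z hz, one_zpow, mul_one]
        · intro z hz
          rw [Complex.exp_add, q₂ z hz, Complex.exp_int_mul, o₂ z hz, one_zpow, mul_one]
        · intro z hz h
          rcases le_or_gt z.im s with h' | h'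
          · have h3 : z.im ≤ s - η := by
              by_contra! h3
              linarith [hp z hz h3]
            have := b1 z hz.2 (by linarith)
            have h4 := hag z hz h'
            linear_combination h4 + j * this
          · have := b2 z hz.2 (by linarith)
            have a1 := hk z hz (by linarith)
            have a2 := hk w hwL (by linarith)
            have a3 := hloc z hz w hwL (by rw [abs_lt]; constructor <;> linarith)
            linear_combination j * this + a1 - a2 + a3 + hj
        · intro z hz h
          have := b2 z hz.2 (by linarith)
          have a1 := hk z hz (by linarith)
          linear_combination a1 + j * this
      · push Not at hw
        refine ⟨l₁, l₂, k, c₁, c₂, q₁, q₂, ?_, fun z hz h => hk z hz (by linarith)⟩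
        intro z hz h
        rcases le_or_gt z.im s with h' | h'
        · exact hag z hz h'
        · linarith [hw z hz h']
  obtain ⟨n, hn⟩ := exists_nat_ge ((2 * R + 1) / η)
  obtain ⟨l₁, l₂, k, c₁, c₂, q₁, q₂, hag, -⟩ := main n
  have hall : ∀ z ∈ X ∩ Y, l₁ z = l₂ z := by
    rintro z ⟨⟨hz, h1⟩, ⟨-, h2⟩⟩
    have hzL : z ∈ L := ⟨hz, le_antisymm h1 h2⟩
    apply hag z hzL
    rw [div_le_iff₀ hη0] at hn
    linarith [(abs_le.1 (him z hzL)).2]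
  obtain ⟨l, hl, h1, h2⟩ := continuousOn_glue c₁ c₂ hXc hYc hall
  have hXY : K ⊆ X ∪ Y := fun z hz => (le_total z.re t).imp (fun h => ⟨hz, h⟩) (fun h => ⟨hz, h⟩)
  refine ⟨l, hl.mono hXY, fun z hz => ?_⟩
  rcases hXY hz with h | h
  · rw [h1 z h, q₁ z h]
  · rw [h2 z h, q₂ z h]

theorem hasLog_rot {f : ℂ → ℂ} {K : Set ℂ} :
    HasLog (fun z => f (I * z)) {z | I * z ∈ K} ↔ HasLog f K := by
  constructor
  · rintro ⟨l, hl, e⟩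
    refine ⟨fun z => l (-I * z), hl.comp (by fun_prop) ?_, ?_⟩
    · intro z hz
      simpa [← mul_assoc] using hz
    · intro z hz
      rw [e (-I * z) (by simpa [← mul_assoc] using hz)]
      simp [← mul_assoc]
  · rintro ⟨l, hl, e⟩
    exact ⟨fun z => l (I * z), hl.comp (by fun_prop) (fun z hz => hz), fun z hz => e _ hz⟩

theorem glue_im {K : Set ℂ} (hK : Full K) {f : ℂ → ℂ} (t : ℝ)
    (h₁ : HasLog f (K ∩ {z | z.im ≤ t})) (h₂ : HasLog f (K ∩ {z | t ≤ z.im})) : HasLog f K := by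
  rw [← hasLog_rot] at h₁ h₂ ⊢
  have hIm : {z | I * z ∈ K} = (fun z => -I * z) '' K := by
    ext z
    simp only [mem_setOf_eq, mem_image]
    constructor
    · intro h; exact ⟨I * z, h, by simp [← mul_assoc]⟩
    · rintro ⟨w, hw, rfl⟩; simpa [← mul_assoc] using hw
  have hIm' : {z | I * z ∈ K}ᶜ = (fun z => -I * z) '' Kᶜ := by
    ext z
    simp only [mem_setOf_eq, mem_image, mem_compl_iff]
    constructor
    · intro h; exact ⟨I * z, h, by simp [← mul_assoc]⟩
    · rintro ⟨w, hw, rfl⟩; simpa [← mul_assoc] using hw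
  refine glue_re ⟨?_, ?_⟩ t ?_ ?_
  · rw [hIm]; exact hK.1.image (by fun_prop)
  · rw [hIm']; exact hK.2.image _ (by fun_prop)
  · convert h₁ using 1
    ext z; simp
  · convert h₂ using 1
    ext z; simp

theorem strip_induction {P : Set ℂ → Prop} {η : ℝ} (hη : 0 < η) (φ : ℂ → ℝ)
    (hφ : ∀ z, |φ z| ≤ ‖z‖)
    (hle : ∀ K t, Full K → Full (K ∩ {z | φ z ≤ t})) (hge : ∀ K t, Full K → Full (K ∩ {z | t ≤ φ z}))
    (hglue : ∀ K t, Full K → P (K ∩ {z | φ z ≤ t}) → P (K ∩ {z | t ≤ φ z}) → P K)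
    {K₀ : Set ℂ} (hK₀ : Full K₀)
    (hsmall : ∀ K a, Full K → K ⊆ K₀ → (∀ z ∈ K, a ≤ φ z ∧ φ z ≤ a + η) → P K) : P K₀ := by
  have main : ∀ n : ℕ, ∀ K a, Full K → K ⊆ K₀ → (∀ z ∈ K, a ≤ φ z ∧ φ z ≤ a + (n + 1) * η) → P K := by
    intro n
    induction n with
    | zero => intro K a hK h0 h; exact hsmall K a hK h0 (by simpa using h)
    | succ n ih =>
      intro K a hK h0 h
      apply hglue K (a + η) hK
      · apply hsmall _ a (hle K _ hK) (inter_subset_left.trans h0)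
        rintro z ⟨hz, hz'⟩
        exact ⟨(h z hz).1, hz'⟩
      · apply ih _ (a + η) (hge K _ hK) (inter_subset_left.trans h0)
        rintro z ⟨hz, hz'⟩
        refine ⟨hz', (h z hz).2.trans (le_of_eq ?_)⟩
        push_cast; ring
  obtain ⟨R, hR⟩ := hK₀.1.isBounded.subset_closedBall 0
  obtain ⟨n, hn⟩ := exists_nat_ge ((2 * R) / η)
  apply main n K₀ (-R) hK₀ subset_rfl
  intro z hz
  have := hR hz
  rw [mem_closedBall, dist_zero_right] at this
  have := abs_le.1 ((hφ z).trans this)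
  rw [div_le_iff₀ hη] at hn
  constructor <;> nlinarith

theorem Full.hasLog {K : Set ℂ} (hK : Full K) {f : ℂ → ℂ} (hf : ContinuousOn f K)
    (h0 : ∀ z ∈ K, f z ≠ 0) : HasLog f K := by
  rcases K.eq_empty_or_nonempty with rfl | hne
  · exact ⟨0, by simp, by simp⟩
  obtain ⟨z₀, hz₀, hmin⟩ := hK.1.exists_isMinOn hne hf.norm
  have hm : 0 < ‖f z₀‖ := norm_pos_iff.2 (h0 z₀ hz₀)
  obtain ⟨δ, hδ, hu⟩ := Metric.uniformContinuousOn_iff.1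
    (hK.1.uniformContinuousOn_of_continuous hf) _ hm
  have hη : 0 < δ / 3 := by positivity
  refine strip_induction hη Complex.re Complex.abs_re_le_norm (fun K t h => h.re_le t)
    (fun K t h => h.re_ge t) (fun K t h h1 h2 => glue_re h t h1 h2) hK ?_
  intro K₁ a hK₁ h1 hre
  refine strip_induction hη Complex.im Complex.abs_im_le_norm (fun K t h => h.im_le t)
    (fun K t h => h.im_ge t) (fun K t h h1 h2 => glue_im h t h1 h2) hK₁ ?_
  intro K₂ b hK₂ h2 him
  rcases K₂.eq_empty_or_nonempty with rfl | ⟨w, hw⟩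
  · exact ⟨0, by simp, by simp⟩
  have hw0 : f w ≠ 0 := h0 w (h1 (h2 hw))
  have hsub : K₂ ⊆ K := h2.trans h1
  have l1 : HasLog (fun z => f z / f w) K₂ := by
    apply HasLog.of_slit ((hf.mono hsub).div_const _)
    intro z hz
    have hd : dist z w < δ := by
      rw [dist_eq]
      refine (Complex.norm_le_abs_re_add_abs_im _).trans_lt ?_
      have e1 := hre z (h2 hz)
      have e2 := hre w (h2 hw)
      have e3 := him z hz
      have e4 := him w hw
      have e5 : |(z - w).re| ≤ δ / 3 := by
        rw [Complex.sub_re, abs_le]; constructor <;> linarith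
      have e6 : |(z - w).im| ≤ δ / 3 := by
        rw [Complex.sub_im, abs_le]; constructor <;> linarith
      linarith
    have := hu z (hsub hz) w (hsub hw) hd
    have e : f z / f w = 1 + (f z - f w) / f w := by field_simp; ring
    rw [e]
    apply mem_slitPlane_of_norm_lt_one
    rw [norm_div, div_lt_one (norm_pos_iff.2 hw0)]
    rw [dist_eq] at this
    exact this.trans_le (hmin (hsub hw))
  have l2 : HasLog (fun _ => f w) K₂ :=
    ⟨fun _ => Complex.log (f w), continuousOn_const, fun z _ => Complex.exp_log hw0⟩
  exact (l1.mul l2).congr fun z _ => div_mul_cancel₀ _ hw0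

end JS


namespace JS

theorem continuousOn_of_comp_compact {X Y Z : Type*} [TopologicalSpace X] [TopologicalSpace Y]
    [T2Space Y] [TopologicalSpace Z] {K : Set X} (hK : IsCompact K) {g : X → Y}
    (hg : ContinuousOn g K) {h : Y → Z} {l : X → Z} (hl : ContinuousOn l K)
    (e : ∀ t ∈ K, h (g t) = l t) : ContinuousOn h (g '' K) := by
  rw [continuousOn_iff_isClosed]
  intro t ht
  obtain ⟨u, hu, hu'⟩ := continuousOn_iff_isClosed.1 hl t ht
  refine ⟨g '' (K ∩ u), ((hK.inter_right hu).image_of_continuousOn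
    (hg.mono inter_subset_left)).isClosed, ?_⟩
  ext y
  constructor
  · rintro ⟨hy, x, hx, rfl⟩
    refine ⟨⟨x, ⟨hx, ?_⟩, rfl⟩, ⟨x, hx, rfl⟩⟩
    have : x ∈ l ⁻¹' t ∩ K := ⟨by rw [mem_preimage, ← e x hx]; exact hy, hx⟩
    rw [hu'] at this; exact this.1
  · rintro ⟨⟨x, ⟨hx, hxu⟩, rfl⟩, h2⟩
    refine ⟨?_, h2⟩
    have : x ∈ u ∩ K := ⟨hxu, hx⟩
    rw [← hu'] at this
    rw [mem_preimage, e x hx]; exact this.1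

/-- A periodic parametrization of a Jordan curve. -/
structure IsJ (γ : ℝ → ℂ) (J : Set ℂ) : Prop where
  cont : Continuous γ
  per : ∀ t, γ (t + 2 * Real.pi) = γ t
  inj : ∀ s t, γ s = γ t → ∃ n : ℤ, s - t = n * (2 * Real.pi)
  rng : range γ = J

theorem isJ_of_embedding {e : Metric.sphere (0 : ℂ) 1 → ℂ} (he : Topology.IsEmbedding e) :
    ∃ γ : ℝ → ℂ, IsJ γ (range e) := by
  have hm : ∀ t : ℝ, Complex.exp (t * I) ∈ Metric.sphere (0 : ℂ) 1 := fun t => by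
    simp [Complex.norm_exp_ofReal_mul_I]
  refine ⟨fun t => e ⟨Complex.exp (t * I), hm t⟩, ?_, ?_, ?_, ?_⟩
  · exact he.continuous.comp (by fun_prop)
  · intro t
    congr 2
    push_cast
    rw [add_mul, Complex.exp_periodic]
  · intro s t h
    have := he.injective h
    rw [Subtype.mk.injEq, Complex.exp_eq_exp_iff_exists_int] at this
    obtain ⟨n, hn⟩ := this
    refine ⟨n, ?_⟩
    have h2 : ((s : ℂ) - t - n * (2 * Real.pi)) * I = 0 := by linear_combination hn
    have h3 := (mul_eq_zero.1 h2).resolve_right I_ne_zero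
    have h4 : ((s - t - n * (2 * Real.pi) : ℝ) : ℂ) = 0 := by push_cast; exact h3
    have := Complex.ofReal_eq_zero.1 h4
    linarith
  · ext z
    constructor
    · rintro ⟨t, rfl⟩; exact mem_range_self _
    · rintro ⟨⟨w, hw⟩, rfl⟩
      refine ⟨arg w, ?_⟩
      have : ‖w‖ = 1 := by simpa using hw
      have h2 := Complex.norm_mul_exp_arg_mul_I w
      rw [this, ofReal_one, one_mul] at h2
      exact congrArg e (Subtype.ext h2)

section
variable {γ : ℝ → ℂ} {J : Set ℂ}

theorem IsJ.injOn (h : IsJ γ J) {a b : ℝ} (hab : b - a < 2 * Real.pi) : InjOn γ (Icc a b) := by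
  intro s hs t ht hst
  obtain ⟨n, hn⟩ := h.inj s t hst
  have hpi := Real.pi_pos
  have h1 : (n : ℝ) < 1 := by
    by_contra! hh
    nlinarith [hs.1, hs.2, ht.1, ht.2]
  have h2 : (-1 : ℝ) < n := by
    by_contra! hh
    nlinarith [hs.1, hs.2, ht.1, ht.2]
  have h1' : n < 1 := by exact_mod_cast h1
  have h2' : -1 < n := by exact_mod_cast h2
  have : n = 0 := by omega
  subst this
  simp at hn; linarith

theorem IsJ.per_int (h : IsJ γ J) (t : ℝ) (n : ℤ) : γ (t + n * (2 * Real.pi)) = γ t := by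
  have : Function.Periodic γ (2 * Real.pi) := h.per
  exact this.int_mul n t

theorem IsJ.arc_compact (h : IsJ γ J) (a b : ℝ) : IsCompact (γ '' Icc a b) :=
  isCompact_Icc.image h.cont

theorem IsJ.arc_preconnected (h : IsJ γ J) (a b : ℝ) : IsPreconnected (γ '' Icc a b) :=
  isPreconnected_Icc.image _ h.cont.continuousOn

theorem IsJ.exists_mem_Icc (h : IsJ γ J) {z : ℂ} (hz : z ∈ J) (a : ℝ) :
    ∃ t ∈ Ico a (a + 2 * Real.pi), γ t = z := by
  rw [← h.rng] at hz
  obtain ⟨s, rfl⟩ := hz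
  have : Function.Periodic γ (2 * Real.pi) := h.per
  obtain ⟨y, hy, hy'⟩ := this.exists_mem_Ico (by positivity) s a
  exact ⟨y, hy, hy'.symm⟩

theorem IsJ.compact (h : IsJ γ J) : IsCompact J := by
  have : J = γ '' Icc 0 (0 + 2 * Real.pi) := by
    ext z
    constructor
    · intro hz
      obtain ⟨t, ht, e⟩ := h.exists_mem_Icc hz 0
      exact ⟨t, ⟨ht.1, ht.2.le⟩, e⟩
    · rintro ⟨t, -, rfl⟩; rw [← h.rng]; exact mem_range_self _
  rw [this]; exact h.arc_compact _ _

theorem IsJ.mem (h : IsJ γ J) (t : ℝ) : γ t ∈ J := h.rng ▸ mem_range_self t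

theorem IsJ.arc_subset (h : IsJ γ J) (S : Set ℝ) : γ '' S ⊆ J := by
  rintro _ ⟨t, -, rfl⟩; exact h.mem t

theorem IsJ.arc_hasLog (h : IsJ γ J) {a b : ℝ} (hle : a ≤ b) (hab : b - a < 2 * Real.pi) {f : ℂ → ℂ}
    (hf : ContinuousOn f (γ '' Icc a b)) (h0 : ∀ z ∈ γ '' Icc a b, f z ≠ 0) :
    HasLog f (γ '' Icc a b) := by
  have hc : Continuous (fun t : ℝ => f (γ (projIcc a b hle t))) := by
    refine hf.comp_continuous (h.cont.comp (continuous_subtype_val.comp continuous_projIcc)) ?_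
    intro t; exact ⟨_, (projIcc a b hle t).2, rfl⟩
  obtain ⟨l, hl, hl'⟩ := exists_log_of_real hc
    (fun t => h0 _ ⟨_, (projIcc a b hle t).2, rfl⟩)
  have hinv : ∀ t ∈ Icc a b, Function.invFunOn γ (Icc a b) (γ t) = t := fun t ht =>
    (h.injOn hab).leftInvOn_invFunOn ht
  refine ⟨fun z => l (Function.invFunOn γ (Icc a b) z),
    continuousOn_of_comp_compact isCompact_Icc h.cont.continuousOn (l := l) hl.continuousOn ?_, ?_⟩
  · intro t ht; simp only [hinv t ht]
  · rintro _ ⟨t, ht, rfl⟩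
    simp only [hinv t ht, hl']
    rw [projIcc_of_mem hle ht]

theorem IsJ.arc_not_mem (h : IsJ γ J) {s t : ℝ} (h1 : s < t) (h2 : t < s + 2 * Real.pi) :
    γ s ≠ γ t := by
  intro he
  have := h.injOn (a := s) (b := t) (by linarith) ⟨le_rfl, h1.le⟩ ⟨h1.le, le_rfl⟩ he
  exact h1.ne this

/-- The complementary arc. -/
theorem IsJ.compl_arc (h : IsJ γ J) (s : ℝ) {η : ℝ} (_hη : 0 < η) (hpi : η ≤ Real.pi) :
    J \ (γ '' Icc (s + η) (s + 2 * Real.pi - η)) ⊆ γ '' Ioo (s - η) (s + η) := by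
  rintro z ⟨hz, hz'⟩
  obtain ⟨t, ht, rfl⟩ := h.exists_mem_Icc hz (s - η)
  by_cases h1 : t < s + η
  · by_cases h2 : t = s - η
    · subst h2
      exfalso; apply hz'
      have hz' : γ (s - η) = γ (s + 2 * Real.pi - η) := by rw [← h.per]; congr 1; ring
      rw [hz']
      exact ⟨_, ⟨by linarith, le_rfl⟩, rfl⟩
    · exact ⟨t, ⟨lt_of_le_of_ne ht.1 (Ne.symm h2), h1⟩, rfl⟩
  · exfalso; apply hz'
    push Not at h1
    exact ⟨t, ⟨h1, by linarith [ht.2]⟩, rfl⟩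

theorem hasLog_glue {f : ℂ → ℂ} {A B : Set ℂ} (cA : IsClosed A) (cB : IsClosed B) {l₁ l₂ : ℂ → ℂ}
    (h₁ : ContinuousOn l₁ A) (h₂ : ContinuousOn l₂ B) (e₁ : ∀ z ∈ A, Complex.exp (l₁ z) = f z)
    (e₂ : ∀ z ∈ B, Complex.exp (l₂ z) = f z) (k : ℂ) (hk : ∀ z ∈ A ∩ B, l₁ z = l₂ z + k)
    (hk1 : Complex.exp k = 1) : HasLog f (A ∪ B) := by
  obtain ⟨l, hl, h1, h2⟩ := continuousOn_glue h₁ (l₂ := fun z => l₂ z + k)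
    (h₂.add continuousOn_const) cA cB hk
  refine ⟨l, hl, ?_⟩
  rintro z (hz | hz)
  · rw [h1 z hz, e₁ z hz]
  · rw [h2 z hz, Complex.exp_add, hk1, mul_one, e₂ z hz]

/-- Halves of the curve. -/
theorem IsJ.halves (h : IsJ γ J) : γ '' Icc 0 Real.pi ∪ γ '' Icc Real.pi (2 * Real.pi) = J := by
  rw [← image_union, Icc_union_Icc_eq_Icc Real.pi_pos.le (by linarith [Real.pi_pos])]
  apply Subset.antisymm (h.arc_subset _)
  intro z hz
  obtain ⟨t, ht, e⟩ := h.exists_mem_Icc hz 0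
  exact ⟨t, ⟨ht.1, by linarith [ht.2]⟩, e⟩

theorem IsJ.halves_inter (h : IsJ γ J) :
    ∀ z ∈ γ '' Icc 0 Real.pi ∩ γ '' Icc Real.pi (2 * Real.pi), z = γ 0 ∨ z = γ Real.pi := by
  have hpi := Real.pi_pos
  rintro _ ⟨⟨s, hs, rfl⟩, ⟨t, ht, hst⟩⟩
  by_cases h1 : t < 2 * Real.pi
  · right
    have := h.injOn (a := 0) (b := t) (by linarith) ⟨by linarith [ht.1], le_rfl⟩
      ⟨hs.1, by linarith [ht.1, hs.2]⟩ hst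
    have : s = Real.pi := by linarith [hs.2, ht.1]
    rw [this]
  · left
    have : t = 0 + 2 * Real.pi := by linarith [ht.2]
    rw [← hst, this, h.per]

/-- Jump of the logarithm. -/
theorem IsJ.jump (h : IsJ γ J) {u : ℂ → ℂ} (hu : ContinuousOn u J) (h0 : ∀ z ∈ J, u z ≠ 0) :
    ∃ (l l' : ℂ → ℂ) (m : ℤ), ContinuousOn l (γ '' Icc 0 Real.pi) ∧
      ContinuousOn l' (γ '' Icc Real.pi (2 * Real.pi)) ∧
      (∀ z ∈ γ '' Icc 0 Real.pi, Complex.exp (l z) = u z) ∧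
      (∀ z ∈ γ '' Icc Real.pi (2 * Real.pi), Complex.exp (l' z) = u z) ∧
      l (γ 0) = l' (γ 0) + m * (2 * Real.pi * I) ∧ l (γ Real.pi) = l' (γ Real.pi) := by
  have hpi := Real.pi_pos
  obtain ⟨l, hl, el⟩ := h.arc_hasLog (a := 0) (b := Real.pi) hpi.le (by linarith)
    (hu.mono (h.arc_subset _)) (fun z hz => h0 z (h.arc_subset _ hz))
  obtain ⟨l', hl', el'⟩ := h.arc_hasLog (a := Real.pi) (b := 2 * Real.pi) (by linarith)
    (by linarith) (hu.mono (h.arc_subset _)) (fun z hz => h0 z (h.arc_subset _ hz))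
  have P1 : γ 0 ∈ γ '' Icc 0 Real.pi := ⟨0, ⟨le_rfl, hpi.le⟩, rfl⟩
  have P2 : γ Real.pi ∈ γ '' Icc 0 Real.pi := ⟨_, ⟨hpi.le, le_rfl⟩, rfl⟩
  have P3 : γ Real.pi ∈ γ '' Icc Real.pi (2 * Real.pi) := ⟨_, ⟨le_rfl, by linarith⟩, rfl⟩
  have P4 : γ 0 ∈ γ '' Icc Real.pi (2 * Real.pi) := ⟨2 * Real.pi, ⟨by linarith, le_rfl⟩, by
    have := h.per 0; rwa [zero_add] at this⟩
  have q1 : Complex.exp (l (γ 0)) = Complex.exp (l' (γ 0)) := by rw [el _ P1, el' _ P4]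
  have q2 : Complex.exp (l (γ Real.pi)) = Complex.exp (l' (γ Real.pi)) := by rw [el _ P2, el' _ P3]
  obtain ⟨m1, hm1⟩ := Complex.exp_eq_exp_iff_exists_int.1 q1
  obtain ⟨m2, hm2⟩ := Complex.exp_eq_exp_iff_exists_int.1 q2
  refine ⟨l, fun z => l' z + m2 * (2 * Real.pi * I), m1 - m2, hl, hl'.add continuousOn_const, el,
    ?_, ?_, hm2⟩
  · intro z hz
    rw [Complex.exp_add, el' z hz, Complex.exp_int_mul_two_pi_mul_I, mul_one]
  · rw [hm1]; push_cast; ring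

theorem IsJ.same_outside (h : IsJ γ J) {U : Set ℂ} (hU : IsOpen U) (hb : Bornology.IsBounded U)
    (hne : U.Nonempty) (hfr : frontier U = J) {b c : ℂ} (hbU : b ∉ closure U) (hcU : c ∉ closure U) :
    c ∈ connectedComponentIn Jᶜ b := by
  have hJ : J ⊆ closure U := hfr ▸ frontier_subset_closure
  have hJc := h.compact
  obtain ⟨a, ha⟩ := hne
  have haJ : a ∉ J := by
    rw [← hfr, hU.frontier_eq]; exact fun hh => hh.2 ha
  have hbJ : b ∉ J := fun hh => hbU (hJ hh)
  have hcJ : c ∉ J := fun hh => hcU (hJ hh)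
  have sub : ∀ x, x ∉ J → ∀ z ∈ J, z - x ≠ 0 := fun x hx z hz he =>
    hx (by rwa [sub_eq_zero.1 he] at hz)
  have cdiv : ∀ x, ContinuousOn (fun z => (z - x) / (z - c)) J := fun x =>
    ContinuousOn.div (by fun_prop) (by fun_prop) (sub c hcJ)
  obtain ⟨l1, l1', m, c1, c1', e1, e1', j1, k1⟩ := h.jump (cdiv a)
    (fun z hz => div_ne_zero (sub a haJ z hz) (sub c hcJ z hz))
  obtain ⟨l2, l2', n, c2, c2', e2, e2', j2, k2⟩ := h.jump (cdiv b)
    (fun z hz => div_ne_zero (sub b hbJ z hz) (sub c hcJ z hz))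
  have clA := (h.arc_compact 0 Real.pi).isClosed
  have clB := (h.arc_compact Real.pi (2 * Real.pi)).isClosed
  have hlog : HasLog (fun z => ((z - a) / (z - c)) ^ n * ((z - b) / (z - c)) ^ (-m)) J := by
    rw [← h.halves]
    refine hasLog_glue clA clB (l₁ := fun z => n * l1 z + (-m : ℤ) * l2 z)
      (l₂ := fun z => n * l1' z + (-m : ℤ) * l2' z) (by fun_prop) (by fun_prop) ?_ ?_ 0 ?_
      Complex.exp_zero
    · intro z hz
      rw [Complex.exp_add, Complex.exp_int_mul, Complex.exp_int_mul, e1 z hz, e2 z hz]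
    · intro z hz
      rw [Complex.exp_add, Complex.exp_int_mul, Complex.exp_int_mul, e1' z hz, e2' z hz]
    · intro z hz
      rcases h.halves_inter z hz with rfl | rfl
      · simp only [j1, j2]; push_cast; ring
      · simp only [k1, k2, add_zero]
  have hn : n = 0 := by
    obtain ⟨l, hl, el⟩ := hlog
    have sub' : ∀ x, x ∉ closure U → ∀ z ∈ closure U, z - x ≠ 0 := fun x hx z hz he =>
      hx (by rwa [sub_eq_zero.1 he] at hz)
    refine degree_zero hU hb ha (n := n) (l := l) (R := fun z => (z - b) ^ m * (z - c) ^ (n - m))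
      (hfr ▸ hl) ?_ ?_ ?_
    · refine ContinuousOn.mul ?_ ?_
      · exact ContinuousOn.zpow₀ (by fun_prop) _ fun z hz => Or.inl (sub' b hbU z hz)
      · exact ContinuousOn.zpow₀ (by fun_prop) _ fun z hz => Or.inl (sub' c hcU z hz)
    · intro z hz
      exact mul_ne_zero (zpow_ne_zero _ (sub' b hbU z hz)) (zpow_ne_zero _ (sub' c hcU z hz))
    · intro z hz
      rw [hfr] at hz
      have hb0 := sub b hbJ z hz
      have hc0 := sub c hcJ z hz
      rw [el z hz]
      simp only [div_zpow, zpow_sub₀ hc0, zpow_neg]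
      field_simp
  subst hn
  refine same_of_hasLog hJc hbJ hcJ ?_
  rw [← h.halves]
  refine hasLog_glue clA clB c2 c2' e2 e2' 0 ?_ Complex.exp_zero
  intro z hz
  rcases h.halves_inter z hz with rfl | rfl
  · simp [j2]
  · simp [k2]

/-- The outside is connected. -/
theorem IsJ.outside_preconnected (h : IsJ γ J) {U : Set ℂ} (hU : IsOpen U)
    (hb : Bornology.IsBounded U) (hne : U.Nonempty) (hfr : frontier U = J) :
    IsPreconnected (closure U)ᶜ := by
  refine isPreconnected_of_forall_pair ?_
  intro b hbU c hcU
  have hc := h.same_outside hU hb hne hfr hbU hcU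
  have hJ : J ⊆ closure U := hfr ▸ frontier_subset_closure
  have hbJ : b ∈ Jᶜ := fun hh => hbU (hJ hh)
  refine ⟨connectedComponentIn Jᶜ b, ?_, mem_connectedComponentIn hbJ, hc,
    isPreconnected_connectedComponentIn⟩
  refine isPreconnected_connectedComponentIn.subset_left_of_subset_union
    isClosed_closure.isOpen_compl hU ?_ ?_ ⟨b, mem_connectedComponentIn hbJ, hbU⟩
  · exact disjoint_left.2 fun x hx hx' => hx (subset_closure hx')
  · intro x hx
    have hxJ := connectedComponentIn_subset _ _ hx
    by_cases hxU : x ∈ U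
    · right; exact hxU
    · left; intro hxc; apply hxJ
      rw [← hfr, hU.frontier_eq]; exact ⟨hxc, hxU⟩

theorem arc_connected_compl (h : IsJ γ J) {a b : ℝ} (hle : a ≤ b) (hab : b - a < 2 * Real.pi)
    {p q : ℂ} (hp : p ∉ γ '' Icc a b) (hq : q ∉ γ '' Icc a b) :
    q ∈ connectedComponentIn (γ '' Icc a b)ᶜ p := by
  refine same_of_hasLog (h.arc_compact a b) hp hq (h.arc_hasLog hle hab ?_ ?_)
  · exact ContinuousOn.div (by fun_prop) (by fun_prop) fun z hz he => hq (by
      rwa [sub_eq_zero.1 he] at hz)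
  · exact fun z hz => div_ne_zero (fun he => hp (by rwa [sub_eq_zero.1 he] at hz))
      (fun he => hq (by rwa [sub_eq_zero.1 he] at hz))

theorem IsJ.small_arc (h : IsJ γ J) (s : ℝ) {ε : ℝ} (hε : 0 < ε) :
    ∃ η, 0 < η ∧ η < Real.pi ∧ γ '' Ioo (s - η) (s + η) ⊆ ball (γ s) ε ∧
      γ s ∉ γ '' Icc (s + η) (s + 2 * Real.pi - η) ∧
      J \ ball (γ s) ε ⊆ γ '' Icc (s + η) (s + 2 * Real.pi - η) := by
  obtain ⟨d, hd, hd'⟩ := Metric.continuous_iff.1 h.cont s ε hε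
  have hpi := Real.pi_pos
  refine ⟨min d (Real.pi / 2), by positivity, by
    linarith [min_le_right d (Real.pi / 2)], ?_, ?_, ?_⟩
  · rintro _ ⟨t, ht, rfl⟩
    rw [mem_ball]; apply hd'
    rw [Real.dist_eq, abs_lt]
    constructor <;> linarith [ht.1, ht.2, min_le_left d (Real.pi / 2)]
  · rintro ⟨t, ht, hst⟩
    have : 0 < min d (Real.pi / 2) := by positivity
    exact h.arc_not_mem (s := s) (t := t) (by linarith [ht.1]) (by linarith [ht.2]) hst.symm
  · rintro z ⟨hz, hz'⟩
    by_contra hcon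
    obtain ⟨t, ht, rfl⟩ := h.compl_arc s (η := min d (Real.pi / 2)) (by positivity)
      (by linarith [min_le_right d (Real.pi / 2)]) ⟨hz, hcon⟩
    apply hz'
    rw [mem_ball]; apply hd'
    rw [Real.dist_eq, abs_lt]
    constructor <;> linarith [ht.1, ht.2, min_le_left d (Real.pi / 2)]

theorem inter_frontier_nonempty' {S t : Set ℂ} (hS : IsPreconnected S) (h1 : (S ∩ t).Nonempty)
    (h2 : (S ∩ tᶜ).Nonempty) : (S ∩ frontier t).Nonempty := by
  by_contra hne
  rw [not_nonempty_iff_eq_empty] at hne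
  have hn : ∀ x ∈ S, x ∉ frontier t := fun x hx hx' => by
    have : x ∈ S ∩ frontier t := ⟨hx, hx'⟩
    rw [hne] at this; exact this
  obtain ⟨x, hx, hxt⟩ := h1
  obtain ⟨y, hy, hyt⟩ := h2
  have hin : ∀ x ∈ S, x ∈ t → x ∈ interior t := fun x hx hxt => by
    by_contra hh; exact hn x hx ⟨subset_closure hxt, hh⟩
  have hout : ∀ x ∈ S, x ∉ t → x ∈ (closure t)ᶜ := fun x hx hxt hh =>
    hn x hx ⟨hh, fun h3 => hxt (interior_subset h3)⟩
  obtain ⟨z, -, hz1, hz2⟩ := hS _ _ isOpen_interior isClosed_closure.isOpen_compl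
    (fun x hx => by
      by_cases hxt : x ∈ t
      · exact Or.inl (hin x hx hxt)
      · exact Or.inr (hout x hx hxt)) ⟨x, hx, hin x hx hxt⟩ ⟨y, hy, hout y hy hyt⟩
  exact hz2 (interior_subset_closure hz1)

theorem IsJ.frontier_outside (h : IsJ γ J) {U : Set ℂ} (hU : IsOpen U)
    (hb : Bornology.IsBounded U) (hne : U.Nonempty) (hfr : frontier U = J) :
    frontier (closure U)ᶜ = J := by
  have hV : IsOpen (closure U)ᶜ := isClosed_closure.isOpen_compl
  have hsub : frontier (closure U)ᶜ ⊆ J := by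
    rw [frontier_compl, ← hfr]; exact frontier_closure_subset
  apply Subset.antisymm hsub
  intro x hx
  by_contra hxV
  have hx2 : x ∉ closure (closure U)ᶜ := by
    intro hh; apply hxV
    rw [hV.frontier_eq]
    exact ⟨hh, fun h3 => h3 (frontier_subset_closure (hfr ▸ hx))⟩
  obtain ⟨ε, hε, hball⟩ := Metric.isOpen_iff.1 isClosed_closure.isOpen_compl x hx2
  obtain ⟨s, -, rfl⟩ := h.exists_mem_Icc hx 0
  obtain ⟨η, hη, hηpi, h1, h2, h3⟩ := h.small_arc s hε
  obtain ⟨a, ha⟩ := hne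
  obtain ⟨c, hc⟩ : ((closure U)ᶜ).Nonempty := by
    rw [nonempty_compl]; intro hh
    have := hb.closure
    rw [hh] at this
    exact NormedSpace.unbounded_univ ℝ ℂ this
  have hJ : J ⊆ closure U := hfr ▸ frontier_subset_closure
  have haA : a ∉ γ '' Icc (s + η) (s + 2 * Real.pi - η) := fun hh => by
    have := h.arc_subset _ hh
    rw [← hfr, hU.frontier_eq] at this; exact this.2 ha
  have hcA : c ∉ γ '' Icc (s + η) (s + 2 * Real.pi - η) := fun hh =>
    hc (hJ (h.arc_subset _ hh))
  have hS := arc_connected_compl h (by linarith) (by linarith) haA hcA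
  set S := connectedComponentIn (γ '' Icc (s + η) (s + 2 * Real.pi - η))ᶜ a with hSdef
  have hSc : IsPreconnected S := isPreconnected_connectedComponentIn
  have haS : a ∈ S := mem_connectedComponentIn haA
  obtain ⟨y, hyS, hy⟩ := inter_frontier_nonempty' hSc (t := (closure U)ᶜ) ⟨c, hS, hc⟩
    ⟨a, haS, fun hh => hh (subset_closure ha)⟩
  have hyA := connectedComponentIn_subset _ _ hyS
  have hyb : y ∈ ball (γ s) ε := by
    by_contra hh; exact hyA (h3 ⟨hsub hy, hh⟩)
  exact hball hyb (frontier_subset_closure hy)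

/-- The complement of `U` is connected. -/
theorem IsJ.compl_preconnected (h : IsJ γ J) {U : Set ℂ} (hU : IsOpen U)
    (hb : Bornology.IsBounded U) (hne : U.Nonempty) (hfr : frontier U = J) :
    IsPreconnected Uᶜ := by
  have h1 := (h.outside_preconnected hU hb hne hfr).closure
  have h2 := h.frontier_outside hU hb hne hfr
  convert h1 using 1
  rw [closure_eq_self_union_frontier, h2]
  ext x
  simp only [mem_compl_iff, mem_union]
  constructor
  · intro hx
    by_cases hc : x ∈ closure U
    · right; rw [← hfr, hU.frontier_eq]; exact ⟨hc, hx⟩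
    · left; exact hc
  · rintro (hx | hx) hxU
    · exact hx (subset_closure hxU)
    · rw [← hfr, hU.frontier_eq] at hx; exact hx.2 hxU

end

/-- Every nonvanishing continuous function has a logarithm. -/
def LogDom (U : Set ℂ) : Prop :=
  ∀ f : ℂ → ℂ, ContinuousOn f U → (∀ z ∈ U, f z ≠ 0) → HasLog f U

theorem logDom_of_compl {U : Set ℂ} (hU : IsOpen U) (hc : IsConnected U) (hb : Bornology.IsBounded U)
    (hcU : IsPreconnected Uᶜ) : LogDom U := by
  intro f hf h0
  obtain ⟨p, hp⟩ := hc.nonempty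
  have hne : Uᶜ.Nonempty := by
    rw [nonempty_compl]; intro hh; rw [hh] at hb; exact NormedSpace.unbounded_univ ℝ ℂ hb
  set O : ℕ → Set ℂ := fun n => {z | 1 / ((n : ℝ) + 1) < infDist z Uᶜ} with hO
  set K : ℕ → Set ℂ := fun n => {z | 1 / ((n : ℝ) + 1) ≤ infDist z Uᶜ} with hK
  have hpos : ∀ n : ℕ, (0 : ℝ) < 1 / ((n : ℝ) + 1) := fun n => by positivity
  have hKU : ∀ n, K n ⊆ U := by
    intro n z hz
    by_contra hzU
    have : infDist z Uᶜ = 0 := infDist_zero_of_mem hzU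
    have h2 : 1 / ((n : ℝ) + 1) ≤ infDist z Uᶜ := hz
    linarith [hpos n]
  have hOK : ∀ n, O n ⊆ K n := fun n z hz => le_of_lt (α := ℝ) hz
  have hOo : ∀ n, IsOpen (O n) := fun n => isOpen_lt continuous_const (continuous_infDist_pt _)
  have hFull : ∀ n, Full (K n) := by
    intro n
    refine ⟨Metric.isCompact_of_isClosed_isBounded
      (isClosed_le continuous_const (continuous_infDist_pt _)) (hb.subset (hKU n)), ?_⟩
    obtain ⟨x0, hx0⟩ := hne
    refine isPreconnected_of_forall x0 ?_
    intro y hy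
    have hy' : infDist y Uᶜ < 1 / ((n : ℝ) + 1) := not_le.1 hy
    obtain ⟨w, hw, hyw⟩ := (infDist_lt_iff ⟨x0, hx0⟩).1 hy'
    refine ⟨Uᶜ ∪ ball w (1 / ((n : ℝ) + 1)), ?_, Or.inl hx0, Or.inr hyw, ?_⟩
    · rintro z (hz | hz) hzK
      · exact hz (hKU n hzK)
      · have h1 := infDist_le_dist_of_mem (x := z) hw
        have h2 : 1 / ((n : ℝ) + 1) ≤ infDist z Uᶜ := hzK
        rw [mem_ball] at hz
        linarith
    · exact hcU.union w hw (mem_ball_self (hpos n)) (convex_ball _ _).isPreconnected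
  have hOmono : ∀ m n, m ≤ n → O m ⊆ O n := by
    intro m n hmn z hz
    refine lt_of_le_of_lt ?_ (show 1 / ((m : ℝ) + 1) < infDist z Uᶜ from hz)
    have : (m : ℝ) ≤ n := by exact_mod_cast hmn
    gcongr
  set V : ℕ → Set ℂ := fun n => connectedComponentIn (O n) p with hV
  have hVo : ∀ n, IsOpen (V n) := fun n => (hOo n).connectedComponentIn
  have hVmono : ∀ m n, m ≤ n → V m ⊆ V n := fun m n hmn =>
    connectedComponentIn_mono p (hOmono m n hmn)
  have hVK : ∀ n, V n ⊆ K n := fun n => (connectedComponentIn_subset _ _).trans (hOK n)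
  have hcover : ∀ z ∈ U, ∃ n, z ∈ V n := by
    intro z hz
    have hpc : IsPathConnected U := hU.isConnected_iff_isPathConnected.1 hc
    obtain ⟨g, hg⟩ := hpc.joinedIn p hp z hz
    have hcomp : IsCompact (range g) := isCompact_range g.continuous
    have hsub : range g ⊆ U := by rintro _ ⟨t, rfl⟩; exact hg t
    obtain ⟨w, hw, hmin⟩ := hcomp.exists_isMinOn (f := fun x => infDist x Uᶜ) (range_nonempty _)
      (continuous_infDist_pt _).continuousOn
    have hwpos : 0 < infDist w Uᶜ :=
      (hU.isClosed_compl.notMem_iff_infDist_pos hne).1 (fun hh => hh (hsub hw))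
    obtain ⟨n, hn⟩ := exists_nat_one_div_lt hwpos
    refine ⟨n, ?_⟩
    have hpg : p ∈ range g := ⟨0, g.source⟩
    have hzg : z ∈ range g := ⟨1, g.target⟩
    refine (isPreconnected_range g.continuous).subset_connectedComponentIn hpg ?_ hzg
    intro x hx
    exact lt_of_lt_of_le hn (hmin hx)
  choose l hl el using fun n => (hFull n).hasLog (hf.mono (hKU n)) (fun z hz => h0 z (hKU n hz))
  classical
  obtain ⟨n0, hn0⟩ := hcover p hp
  -- normalized logs
  set L : ℕ → ℂ → ℂ := fun n z => l n z - l n p + l n0 p with hL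
  have hpV : ∀ n z, z ∈ V n → p ∈ V n := fun n z hz =>
    mem_connectedComponentIn (connectedComponentIn_nonempty_iff.1 ⟨z, hz⟩)
  have hLc : ∀ n, ContinuousOn (L n) (V n) := fun n =>
    (((hl n).mono (hVK n)).sub continuousOn_const).add continuousOn_const
  have hLe : ∀ n, ∀ z ∈ V n, Complex.exp (L n z) = f z := by
    intro n z hz
    simp only [hL]
    rw [Complex.exp_add, Complex.exp_sub, el n z (hVK n hz), el n p (hVK n (hpV n z hz)),
      el n0 p (hVK n0 hn0), div_mul_cancel₀ _ (h0 p hp)]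
  have hagree : ∀ m n, m ≤ n → ∀ z ∈ V m, L m z = L n z := by
    intro m n hmn z hz
    have := exp_const (S := V m) isPreconnected_connectedComponentIn (g := fun z => L m z - L n z)
      ((hLc m).sub ((hLc n).mono (hVmono m n hmn))) (fun x hx => by
        rw [Complex.exp_sub, hLe m x hx, hLe n x (hVmono m n hmn hx),
          div_self (h0 x (hKU m (hVK m hx)))]) hz (hpV m z hz)
    simp only [hL] at this ⊢
    linear_combination this
  have hex : ∀ z, ∃ n, z ∈ U → z ∈ V n := fun z => by
    by_cases hz : z ∈ U
    · obtain ⟨n, hn⟩ := hcover z hz; exact ⟨n, fun _ => hn⟩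
    · exact ⟨0, fun h => absurd h hz⟩
  choose N hN using hex
  have hLN : ∀ n, ∀ z ∈ V n, L (N z) z = L n z := by
    intro n z hz
    have hzU := hKU n (hVK n hz)
    rcases le_total n (N z) with h | h
    · exact (hagree n (N z) h z hz).symm
    · exact hagree (N z) n h z (hN z hzU)
  refine ⟨fun z => L (N z) z, ?_, fun z hz => hLe _ z (hN z hz)⟩
  intro z hz
  apply ContinuousAt.continuousWithinAt
  have h1 : ContinuousAt (L (N z)) z := (hLc (N z)).continuousAt ((hVo _).mem_nhds (hN z hz))
  refine h1.congr ?_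
  filter_upwards [(hVo (N z)).mem_nhds (hN z hz)] with w hw
  exact (hLN (N z) w hw).symm

end JS


namespace JS

theorem subset_of_disjoint_frontier {S t : Set ℂ} (hS : IsPreconnected S) (h1 : (S ∩ t).Nonempty)
    (h2 : ∀ x ∈ S, x ∉ frontier t) : S ⊆ t := by
  intro x hx
  by_contra hxt
  obtain ⟨y, hy, hy'⟩ := inter_frontier_nonempty' hS h1 ⟨x, hx, hxt⟩
  exact h2 y hy hy'

theorem IsJ.ulc {γ : ℝ → ℂ} {J : Set ℂ} (h : IsJ γ J) {U : Set ℂ} (hU : IsOpen U)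
    (hc : IsPreconnected U) (hb : Bornology.IsBounded U) (hfr : frontier U = J) {x : ℂ}
    (hx : x ∈ J) {ε : ℝ} (hε : 0 < ε) :
    ∃ δ, 0 < δ ∧ δ ≤ ε ∧ ∀ a ∈ U ∩ ball x δ, ∀ b ∈ U ∩ ball x δ,
      b ∈ connectedComponentIn (U ∩ ball x ε) a := by
  obtain ⟨s, -, rfl⟩ := h.exists_mem_Icc hx 0
  obtain ⟨η, hη, hηpi, h1, h2, h3⟩ := h.small_arc s hε
  set B := γ '' Icc (s + η) (s + 2 * Real.pi - η) with hB
  have hBc : IsCompact B := h.arc_compact _ _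
  obtain ⟨d, hd, hdB⟩ := Metric.isOpen_iff.1 hBc.isClosed.isOpen_compl (γ s) h2
  obtain ⟨R, hR⟩ := hb.subset_closedBall (γ s)
  have hUJ : ∀ z ∈ U, z ∉ J := fun z hz hzJ => by
    rw [← hfr, hU.frontier_eq] at hzJ; exact hzJ.2 hz
  refine ⟨min d ε, by positivity, min_le_right _ _, ?_⟩
  rintro a ⟨haU, ha⟩ b ⟨hbU, hb'⟩
  set K₂ := B ∪ (closedBall (γ s) R \ ball (γ s) ε) with hK₂
  have hK₂c : IsCompact K₂ := hBc.union ((isCompact_closedBall _ _).diff isOpen_ball)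
  have hIntg : J ∩ K₂ = B := by
    apply Subset.antisymm
    · rintro z ⟨hz, hz' | hz'⟩
      · exact hz'
      · exact h3 ⟨hz, hz'.2⟩
    · exact fun z hz => ⟨h.arc_subset _ hz, Or.inl hz⟩
  have hb1 : b ∈ connectedComponentIn Jᶜ a :=
    hc.subset_connectedComponentIn haU hUJ hbU
  have hb2 : b ∈ connectedComponentIn K₂ᶜ a := by
    refine (convex_ball (γ s) (min d ε)).isPreconnected.subset_connectedComponentIn ha ?_ hb'
    rintro z hz (hzB | hzA)
    · exact hdB (ball_subset_ball (min_le_left _ _) hz) hzB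
    · exact hzA.2 (ball_subset_ball (min_le_right _ _) hz)
  have key := janiszewski h.compact hK₂c (by rw [hIntg]; exact h.arc_preconnected _ _) hb1 hb2
  have haS : a ∈ connectedComponentIn (J ∪ K₂)ᶜ a :=
    mem_connectedComponentIn (connectedComponentIn_nonempty_iff.1 ⟨b, key⟩)
  have hS : IsPreconnected (connectedComponentIn (J ∪ K₂)ᶜ a) := isPreconnected_connectedComponentIn
  have hSsub : connectedComponentIn (J ∪ K₂)ᶜ a ⊆ (J ∪ K₂)ᶜ := connectedComponentIn_subset _ _
  have hSU : connectedComponentIn (J ∪ K₂)ᶜ a ⊆ U :=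
    subset_of_disjoint_frontier hS ⟨a, haS, haU⟩ fun z hz hzf => hSsub hz (Or.inl (hfr ▸ hzf))
  refine hS.subset_connectedComponentIn haS ?_ key
  intro z hz
  refine ⟨hSU hz, ?_⟩
  by_contra hzb
  exact hSsub hz (Or.inr (Or.inr ⟨hR (hSU hz), hzb⟩))

end JS


namespace JS

/-- Disc automorphism. -/
noncomputable def mob (a z : ℂ) : ℂ := (z - a) / (1 - (starRingEnd ℂ) a * z)

theorem mob_den {a z : ℂ} (ha : ‖a‖ < 1) (hz : ‖z‖ < 1) : 1 - (starRingEnd ℂ) a * z ≠ 0 := by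
  intro h
  have h1 : (starRingEnd ℂ) a * z = 1 := by linear_combination -h
  have h2 : ‖(starRingEnd ℂ) a * z‖ = 1 := by rw [h1, norm_one]
  rw [norm_mul, RCLike.norm_conj] at h2
  nlinarith [norm_nonneg a, norm_nonneg z]

theorem one_sub_conj (a : ℂ) : 1 - (starRingEnd ℂ) a * a = ((1 - ‖a‖ ^ 2 : ℝ) : ℂ) := by
  rw [mul_comm, Complex.mul_conj, Complex.normSq_eq_norm_sq]; push_cast; ring

theorem mob_norm_lt {a z : ℂ} (ha : ‖a‖ < 1) (hz : ‖z‖ < 1) : ‖mob a z‖ < 1 := by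
  have hd := mob_den ha hz
  rw [mob, norm_div, div_lt_one (norm_pos_iff.2 hd)]
  have h1 : ‖1 - (starRingEnd ℂ) a * z‖ ^ 2 - ‖z - a‖ ^ 2 = (1 - ‖a‖ ^ 2) * (1 - ‖z‖ ^ 2) := by
    simp only [← Complex.normSq_eq_norm_sq, Complex.normSq_apply]
    simp
    ring
  have h2 : 0 < (1 - ‖a‖ ^ 2) * (1 - ‖z‖ ^ 2) := by
    apply mul_pos <;> nlinarith [norm_nonneg a, norm_nonneg z]
  exact lt_of_pow_lt_pow_left₀ 2 (norm_nonneg _) (by linarith)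

theorem mob_inj {a z w : ℂ} (ha : ‖a‖ < 1) (hz : ‖z‖ < 1) (hw : ‖w‖ < 1) (h : mob a z = mob a w) :
    z = w := by
  rw [mob, mob, div_eq_div_iff (mob_den ha hz) (mob_den ha hw)] at h
  have h1 : (z - w) * (1 - (starRingEnd ℂ) a * a) = 0 := by linear_combination h
  have h2 := (mul_eq_zero.1 h1).resolve_right (mob_den ha ha)
  exact sub_eq_zero.1 h2

theorem mob_hasDerivAt {a z : ℂ} (ha : ‖a‖ < 1) (hz : ‖z‖ < 1) :
    HasDerivAt (mob a) ((1 - (starRingEnd ℂ) a * a) / (1 - (starRingEnd ℂ) a * z) ^ 2) z := by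
  have h1 : HasDerivAt (fun z => z - a) 1 z := (hasDerivAt_id z).sub_const a
  have h2 : HasDerivAt (fun z => 1 - (starRingEnd ℂ) a * z) (-((starRingEnd ℂ) a * 1)) z :=
    ((hasDerivAt_id z).const_mul _).const_sub 1
  refine (h1.div h2 (mob_den ha hz)).congr_deriv ?_
  congr 1; ring

theorem mob_deriv_ne {a z : ℂ} (ha : ‖a‖ < 1) (hz : ‖z‖ < 1) :
    (1 - (starRingEnd ℂ) a * a) / (1 - (starRingEnd ℂ) a * z) ^ 2 ≠ 0 :=
  div_ne_zero (mob_den ha ha) (pow_ne_zero _ (mob_den ha hz))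

theorem hurwitz {ι : Type*} {φ : Filter ι} [φ.NeBot] {U : Set ℂ} (hU : IsOpen U) {G : ι → ℂ → ℂ}
    {g : ℂ → ℂ} (hG : ∀ n, DifferentiableOn ℂ (G n) U) (hlim : TendstoLocallyUniformlyOn G g φ U)
    {b : ℂ} (hb : b ∈ U) {d : ℝ} (hd : 0 < d) (h0 : ∀ n, ∀ z ∈ U ∩ ball b d, G n z ≠ 0)
    (hgb : g b = 0) : ∀ᶠ z in 𝓝 b, g z = 0 := by
  have hgd : DifferentiableOn ℂ g U := hlim.differentiableOn (Eventually.of_forall hG) hU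
  have han : AnalyticAt ℂ g b := hgd.analyticAt (hU.mem_nhds hb)
  refine han.eventually_eq_zero_or_eventually_ne_zero.resolve_right ?_
  intro hne
  rw [eventually_nhdsWithin_iff] at hne
  obtain ⟨r1, hr1, hr1'⟩ := Metric.eventually_nhds_iff_ball.1 hne
  obtain ⟨r2, hr2, hr2'⟩ := Metric.isOpen_iff.1 hU b hb
  set r := min (min r1 r2) d / 2 with hr
  have hrpos : 0 < r := by positivity
  have hrr1 : r < r1 := by
    have : min (min r1 r2) d ≤ r1 := (min_le_left _ _).trans (min_le_left _ _)
    have h3 : 0 < min (min r1 r2) d := by positivity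
    linarith
  have hrr2 : r < r2 := by
    have : min (min r1 r2) d ≤ r2 := (min_le_left _ _).trans (min_le_right _ _)
    have h3 : 0 < min (min r1 r2) d := by positivity
    linarith
  have hrd : r < d := by
    have : min (min r1 r2) d ≤ d := (min_le_right _ _)
    have h3 : 0 < min (min r1 r2) d := by positivity
    linarith
  have hcU : closedBall b r ⊆ U := (closedBall_subset_ball hrr2).trans hr2'
  have hcD : closedBall b r ⊆ ball b d := closedBall_subset_ball hrd
  obtain ⟨w, hw, hmin⟩ := (isCompact_sphere b r).exists_isMinOn (f := fun z => ‖g z‖)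
    (NormedSpace.sphere_nonempty.2 hrpos.le)
    (hgd.continuousOn.mono (sphere_subset_closedBall.trans hcU)).norm
  set m := ‖g w‖ with hm
  have hmpos : 0 < m := by
    rw [hm, norm_pos_iff]
    apply hr1' w
    · rw [mem_ball, mem_sphere.1 hw]; exact hrr1
    · intro hwb
      rw [mem_singleton_iff] at hwb; rw [hwb, mem_sphere, dist_self] at hw; linarith
  have hunif : TendstoUniformlyOn G g φ (closedBall b r) :=
    (tendstoLocallyUniformlyOn_iff_forall_isCompact hU).1 hlim _ hcU (isCompact_closedBall _ _)
  obtain ⟨n, hn⟩ := (Metric.tendstoUniformlyOn_iff.1 hunif (m / 2) (by positivity)).exists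
  have hGne : ∀ z ∈ closedBall b r, G n z ≠ 0 := fun z hz => h0 n z ⟨hcU hz, hcD hz⟩
  have hdc : DiffContOnCl ℂ (fun z => (G n z)⁻¹) (ball b r) := by
    apply DifferentiableOn.diffContOnCl
    rw [closure_ball _ hrpos.ne']
    exact ((hG n).mono hcU).inv hGne
  have hle : ‖(G n b)⁻¹‖ ≤ (m / 2)⁻¹ := by
    refine Complex.norm_le_of_forall_mem_frontier_norm_le isBounded_ball hdc ?_
      (subset_closure (mem_ball_self hrpos))
    intro z hz
    rw [frontier_ball _ hrpos.ne'] at hz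
    rw [norm_inv]
    have h1 : m ≤ ‖g z‖ := hmin hz
    have h2 := hn z (sphere_subset_closedBall hz)
    rw [dist_eq_norm] at h2
    have h3 := norm_sub_norm_le (g z) (G n z)
    gcongr
    linarith
  have h2 := hn b (mem_closedBall_self hrpos.le)
  rw [hgb, dist_eq_norm, zero_sub, norm_neg] at h2
  have h3 : 0 < ‖G n b‖ := norm_pos_iff.2 (hGne b (mem_closedBall_self hrpos.le))
  rw [norm_inv] at hle
  have := (inv_le_inv₀ h3 (by positivity)).1 hle
  linarith

theorem sqrt_deriv {U : Set ℂ} (hU : IsOpen U) {h ψ : ℂ → ℂ} (hc : ContinuousOn h U)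
    (hsq : ∀ z ∈ U, h z ^ 2 = ψ z) {z ψ' : ℂ} (hz : z ∈ U) (h0 : h z ≠ 0) (hψ : HasDerivAt ψ ψ' z) :
    HasDerivAt h (ψ' / (2 * h z)) z := by
  rw [hasDerivAt_iff_tendsto_slope] at hψ ⊢
  have hca : ContinuousAt h z := hc.continuousAt (hU.mem_nhds hz)
  have h1 : Tendsto (fun w => h w + h z) (𝓝[≠] z) (𝓝 (2 * h z)) := by
    rw [two_mul]
    exact (hca.add continuousAt_const).tendsto.mono_left nhdsWithin_le_nhds
  have h2 : 2 * h z ≠ 0 := mul_ne_zero two_ne_zero h0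
  refine (hψ.div h1 h2).congr' ?_
  have e1 : ∀ᶠ w in 𝓝[≠] z, h w + h z ≠ 0 := h1.eventually_ne h2
  have e2 : ∀ᶠ w in 𝓝[≠] z, w ∈ U := nhdsWithin_le_nhds (hU.mem_nhds hz)
  filter_upwards [e1, e2] with w hw hwU
  rw [Pi.div_apply, slope_def_field, slope_def_field, ← hsq w hwU, ← hsq z hz]
  rw [div_eq_iff hw]
  ring

/-- The extremal family. -/
def Fam (U : Set ℂ) (p : ℂ) : Set (ℂ → ℂ) :=
  {f | DifferentiableOn ℂ f U ∧ InjOn f U ∧ (∀ z ∈ U, ‖f z‖ < 1) ∧ f p = 0 ∧ ∀ z ∈ U, deriv f z ≠ 0}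

theorem fam_improve {U : Set ℂ} (hU : IsOpen U) (hlog : LogDom U) {p : ℂ} (hp : p ∈ U) {f : ℂ → ℂ}
    (hf : f ∈ Fam U p) {w : ℂ} (hw : ‖w‖ < 1) (hwU : w ∉ f '' U) :
    ∃ F ∈ Fam U p, ‖deriv f p‖ < ‖deriv F p‖ := by
  obtain ⟨hd, hinj, hn, h0, hder⟩ := hf
  have hfd : ∀ z ∈ U, HasDerivAt f (deriv f z) z := fun z hz =>
    (hd.differentiableAt (hU.mem_nhds hz)).hasDerivAt
  set ψ : ℂ → ℂ := fun z => mob w (f z) with hψ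
  set ψ' : ℂ → ℂ := fun z => (1 - (starRingEnd ℂ) w * w) / (1 - (starRingEnd ℂ) w * f z) ^ 2 *
    deriv f z with hψ'
  have hψd : ∀ z ∈ U, HasDerivAt ψ (ψ' z) z := fun z hz =>
    (mob_hasDerivAt hw (hn z hz)).comp z (hfd z hz)
  have hψ0 : ∀ z ∈ U, ψ z ≠ 0 := by
    intro z hz he
    rcases div_eq_zero_iff.1 he with h | h
    · exact hwU ⟨z, hz, sub_eq_zero.1 h⟩
    · exact mob_den hw (hn z hz) h
  have hψc : ContinuousOn ψ U := fun z hz => (hψd z hz).continuousAt.continuousWithinAt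
  obtain ⟨l, hl, el⟩ := hlog ψ hψc hψ0
  set h : ℂ → ℂ := fun z => Complex.exp (l z / 2) with hh
  have hhc : ContinuousOn h U := (hl.div_const 2).cexp
  have hsq : ∀ z ∈ U, h z ^ 2 = ψ z := by
    intro z hz
    rw [← el z hz, ← Complex.exp_nat_mul]
    congr 1; push_cast; ring
  have hh0 : ∀ z, h z ≠ 0 := fun z => Complex.exp_ne_zero _
  have hhd : ∀ z ∈ U, HasDerivAt h (ψ' z / (2 * h z)) z := fun z hz =>
    sqrt_deriv hU hhc hsq hz (hh0 z) (hψd z hz)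
  have hhn : ∀ z ∈ U, ‖h z‖ < 1 := by
    intro z hz
    have h1 : ‖h z‖ ^ 2 < 1 := by rw [← norm_pow, hsq z hz]; exact mob_norm_lt hw (hn z hz)
    by_contra! h2
    nlinarith
  set c := h p with hc
  have hcn : ‖c‖ < 1 := hhn p hp
  set F : ℂ → ℂ := fun z => mob c (h z) with hF
  have hFd : ∀ z ∈ U, HasDerivAt F ((1 - (starRingEnd ℂ) c * c) / (1 - (starRingEnd ℂ) c * h z) ^ 2 *
    (ψ' z / (2 * h z))) z := fun z hz => (mob_hasDerivAt hcn (hhn z hz)).comp z (hhd z hz)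
  refine ⟨F, ⟨fun z hz => (hFd z hz).differentiableAt.differentiableWithinAt, ?_, ?_, ?_, ?_⟩, ?_⟩
  · intro z hz y hy hzy
    have h1 := mob_inj hcn (hhn z hz) (hhn y hy) hzy
    have h2 : ψ z = ψ y := by rw [← hsq z hz, ← hsq y hy, h1]
    exact hinj hz hy (mob_inj hw (hn z hz) (hn y hy) h2)
  · exact fun z hz => mob_norm_lt hcn (hhn z hz)
  · simp [hF, mob, hc]
  · intro z hz
    rw [(hFd z hz).deriv]
    refine mul_ne_zero (mob_deriv_ne hcn (hhn z hz)) (div_ne_zero ?_ (mul_ne_zero two_ne_zero (hh0 z)))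
    exact mul_ne_zero (mob_deriv_ne hw (hn z hz)) (hder z hz)
  · rw [(hFd p hp).deriv]
    have hcw : ‖c‖ ^ 2 = ‖w‖ := by
      rw [← norm_pow, hc, hsq p hp]
      simp [hψ, mob, h0]
    have hc0 : 0 < ‖c‖ := norm_pos_iff.2 (hh0 p)
    have hfp : 0 < ‖deriv f p‖ := norm_pos_iff.2 (hder p hp)
    simp only [hψ', h0, mul_zero, sub_zero, one_pow, div_one, ← hc]
    rw [one_sub_conj, one_sub_conj]
    rw [norm_mul, norm_div, norm_div, norm_pow, norm_mul, norm_mul, Complex.norm_real,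
      Complex.norm_real, Real.norm_eq_abs, Real.norm_eq_abs, ← hcw]
    have q1 : 0 < 1 - ‖c‖ ^ 2 := by nlinarith
    have q2 : 0 < 1 - (‖c‖ ^ 2) ^ 2 := by nlinarith [sq_nonneg ‖c‖]
    rw [abs_of_pos q1, abs_of_pos q2, Complex.norm_two]
    have key : (1 - ‖c‖ ^ 2) / (1 - ‖c‖ ^ 2) ^ 2 * ((1 - (‖c‖ ^ 2) ^ 2) * ‖deriv f p‖ / (2 * ‖c‖)) =
        ‖deriv f p‖ * ((1 + ‖c‖ ^ 2) / (2 * ‖c‖)) := by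
      field_simp
      ring
    rw [key]
    have : 1 < (1 + ‖c‖ ^ 2) / (2 * ‖c‖) := by
      rw [lt_div_iff₀ (by positivity)]
      nlinarith [sq_pos_of_pos (sub_pos.2 hcn)]
    nlinarith

theorem riemann_mapping {U : Set ℂ} (hU : IsOpen U) (hc : IsPreconnected U)
    (hb : Bornology.IsBounded U) (hlog : LogDom U) {p : ℂ} (hp : p ∈ U) :
    ∃ f ∈ Fam U p, f '' U = ball 0 1 := by
  obtain ⟨r, hr, hrU⟩ := Metric.isOpen_iff.1 hU p hp
  have hbound : ∀ f ∈ Fam U p, ‖deriv f p‖ ≤ 1 / r := by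
    intro f hf
    refine norm_deriv_le_div_of_mapsTo_ball (hf.1.mono hrU) ?_ hr
    intro z hz
    rw [hf.2.2.2.1, mem_closedBall, dist_zero_right]
    exact (hf.2.2.1 z (hrU hz)).le
  set S : Set ℝ := (fun f : ℂ → ℂ => ‖deriv f p‖) '' Fam U p with hS
  have hSb : BddAbove S := ⟨1 / r, by rintro _ ⟨f, hf, rfl⟩; exact hbound f hf⟩
  obtain ⟨D, hD⟩ := hb.subset_ball p
  have hDpos : 0 < D := by have := hD hp; simpa using this
  have hD0 : (D : ℂ) ≠ 0 := by exact_mod_cast hDpos.ne'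
  have hdid : ∀ z, HasDerivAt (fun z => (z - p) / (D : ℂ)) (1 / (D : ℂ)) z := fun z =>
    ((hasDerivAt_id z).sub_const p).div_const _
  have hfam0 : (fun z => (z - p) / (D : ℂ)) ∈ Fam U p := by
    refine ⟨fun z _ => (hdid z).differentiableAt.differentiableWithinAt, ?_, ?_, by simp, ?_⟩
    · intro z _ y _ h
      have h : (z - p) / (D : ℂ) = (y - p) / (D : ℂ) := h
      rw [div_left_inj' hD0] at h
      linear_combination h
    · intro z hz
      have := hD hz
      rw [mem_ball, dist_eq_norm] at this
      rw [norm_div, Complex.norm_real, Real.norm_eq_abs, abs_of_pos hDpos, div_lt_one hDpos]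
      exact this
    · intro z _; rw [(hdid z).deriv]; exact one_div_ne_zero hD0
  have hSne : S.Nonempty := ⟨_, _, hfam0, rfl⟩
  have hMpos : 0 < sSup S := by
    refine lt_of_lt_of_le ?_ (le_csSup hSb ⟨_, hfam0, rfl⟩)
    simp only [(hdid p).deriv]
    exact norm_pos_iff.2 (one_div_ne_zero hD0)
  obtain ⟨u, -, hu, huS⟩ := exists_seq_tendsto_sSup hSne hSb
  choose F hF hFu using huS
  set φ : Ultrafilter ℕ := hyperfilter ℕ with hφ
  have hex : ∀ z, ∃ y, z ∈ U → Tendsto (fun n => F n z) φ (𝓝 y) := by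
    intro z
    by_cases hz : z ∈ U
    · obtain ⟨y, -, hy⟩ := (isCompact_closedBall (0 : ℂ) 1).ultrafilter_le_nhds
        (φ.map (fun n => F n z)) (by
          rw [le_principal_iff]
          refine mem_map.2 (univ_mem' fun n => ?_)
          simpa using ((hF n).2.2.1 z hz).le)
      exact ⟨y, fun _ => hy⟩
    · exact ⟨0, fun h => absurd h hz⟩
  choose f hf using hex
  have hFd : ∀ n, DifferentiableOn ℂ (F n) U := fun n => (hF n).1
  have hlim : TendstoLocallyUniformlyOn F f (φ : Filter ℕ) U := by
    rw [Metric.tendstoLocallyUniformlyOn_iff]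
    intro ε hε x hx
    obtain ⟨R, hR, hRU⟩ := Metric.isOpen_iff.1 hU x hx
    have hlip : ∀ n, ∀ y ∈ ball x R, dist (F n y) (F n x) ≤ 2 / R * dist y x := by
      intro n y hy
      refine dist_le_div_mul_dist_of_mapsTo_ball ((hFd n).mono hRU) ?_ hy
      intro z hz
      rw [mem_closedBall, dist_eq_norm]
      refine (norm_sub_le _ _).trans ?_
      linarith [(hF n).2.2.1 z (hRU hz), (hF n).2.2.1 x hx]
    have hlipf : ∀ y ∈ ball x R, dist (f y) (f x) ≤ 2 / R * dist y x := by
      intro y hy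
      refine le_of_tendsto ((hf y (hRU hy)).dist (hf x hx)) (Eventually.of_forall fun n => ?_)
      exact hlip n y hy
    refine ⟨ball x (min R (ε * R / 6)), mem_nhdsWithin_of_mem_nhds (ball_mem_nhds _ (by positivity)),
      ?_⟩
    have h1 := Metric.tendsto_nhds.1 (hf x hx) (ε / 3) (by positivity)
    filter_upwards [h1] with n hn y hy
    have hyR : y ∈ ball x R := ball_subset_ball (min_le_left _ _) hy
    have hyd : dist y x < ε * R / 6 := lt_of_lt_of_le hy (min_le_right _ _)
    have h2 : 2 / R * dist y x < ε / 3 := by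
      calc 2 / R * dist y x < 2 / R * (ε * R / 6) := by gcongr
        _ = ε / 3 := by field_simp; norm_num
    have h3 := dist_triangle4 (f y) (f x) (F n x) (F n y)
    have h4 := hlipf y hyR
    have h5 := hlip n y hyR
    rw [dist_comm] at hn h5
    linarith
  have hfd : DifferentiableOn ℂ f U := hlim.differentiableOn (Eventually.of_forall hFd) hU
  have hdlim := hlim.deriv (Eventually.of_forall hFd) hU
  have hder : ‖deriv f p‖ = sSup S := by
    have h1 : Tendsto (fun n => ‖deriv (F n) p‖) φ (𝓝 ‖deriv f p‖) :=
      (hdlim.tendsto_at hp).norm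
    have h2 : Tendsto (fun n => ‖deriv (F n) p‖) φ (𝓝 (sSup S)) := by
      have : (fun n => ‖deriv (F n) p‖) = u := funext hFu
      rw [this]
      exact hu.mono_left Nat.hyperfilter_le_atTop
    exact tendsto_nhds_unique h1 h2
  have hderne : deriv f p ≠ 0 := by
    rw [← norm_pos_iff, hder]; exact hMpos
  have hfp : f p = 0 := by
    refine tendsto_nhds_unique (hf p hp) ?_
    simp only [(hF _).2.2.2.1]
    exact tendsto_const_nhds
  have hle : ∀ z ∈ U, ‖f z‖ ≤ 1 := by
    intro z hz
    exact le_of_tendsto (hf z hz).norm (Eventually.of_forall fun n => ((hF n).2.2.1 z hz).le)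
  have hconst : ∀ c, ¬ EqOn f (Function.const ℂ c) U := by
    intro c hcon
    apply hderne
    have : f =ᶠ[𝓝 p] fun _ => c := by
      filter_upwards [hU.mem_nhds hp] with z hz using hcon hz
    rw [this.deriv_eq, deriv_const]
  have hlt : ∀ z ∈ U, ‖f z‖ < 1 := by
    intro z hz
    refine lt_of_le_of_ne (hle z hz) fun he => hconst (f z) ?_
    refine eqOn_of_isPreconnected_of_isMaxOn_norm hc hU hfd hz ?_
    intro y hy
    simp only [Function.comp, mem_ofPred_eq]
    rw [he]; exact hle y hy
  have hfan : AnalyticOnNhd ℂ f U := hfd.analyticOnNhd hU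
  have hinj : InjOn f U := by
    intro a ha b hb' hab
    by_contra hne
    apply hconst (f a)
    have hd : 0 < dist a b := dist_pos.2 hne
    have h1 : ∀ᶠ z in 𝓝 b, f z - f a = 0 := by
      refine hurwitz (φ := (φ : Filter ℕ)) hU (G := fun n z => F n z - F n a)
        (g := fun z => f z - f a) (fun n => (hFd n).sub_const _) ?_ hb' hd ?_
        (by rw [hab, sub_self])
      · rw [Metric.tendstoLocallyUniformlyOn_iff] at hlim ⊢
        intro ε hε x hx
        obtain ⟨t, ht, h⟩ := hlim (ε / 2) (by positivity) x hx
        refine ⟨t, ht, ?_⟩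
        filter_upwards [h, Metric.tendsto_nhds.1 (hf a ha) (ε / 2) (by positivity)] with n hn hn' y hy
        have := hn y hy
        have h2 := dist_sub_sub_le (f y) (f a) (F n y) (F n a)
        rw [dist_comm (F n a)] at hn'
        linarith
      · rintro n z ⟨hz, hzb⟩ he
        have := (hF n).2.1 hz ha (sub_eq_zero.1 he)
        rw [this, mem_ball] at hzb
        exact lt_irrefl _ hzb
    have h2 := (hfan.sub (analyticOnNhd_const (v := f a))).eqOn_zero_of_preconnected_of_eventuallyEq_zero
      hc hb' h1
    intro z hz
    exact sub_eq_zero.1 (h2 hz)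
  have hdne : ∀ z ∈ U, deriv f z ≠ 0 := by
    intro b hb' he
    have h1 : ∀ᶠ z in 𝓝 b, deriv f z = 0 := by
      refine hurwitz (φ := (φ : Filter ℕ)) hU (G := fun n z => deriv (F n) z)
        (fun n => (hFd n).deriv hU) hdlim hb' one_pos ?_ he
      rintro n z ⟨hz, -⟩
      exact (hF n).2.2.2.2 z hz
    have h2 := hfan.deriv.eqOn_zero_of_preconnected_of_eventuallyEq_zero hc hb' h1
    exact hderne (h2 hp)
  have hfF : f ∈ Fam U p := ⟨hfd, hinj, hlt, hfp, hdne⟩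
  refine ⟨f, hfF, ?_⟩
  apply Subset.antisymm
  · rintro _ ⟨z, hz, rfl⟩; simpa using hlt z hz
  · intro w hw
    by_contra hwU
    obtain ⟨G, hG, hGlt⟩ := fam_improve hU hlog hp hfF (by simpa using hw) hwU
    rw [hder] at hGlt
    exact absurd (le_csSup hSb ⟨G, hG, rfl⟩) (not_le.2 hGlt)

end JS


namespace JS

open MeasureTheory in
theorem strip_area {g : ℂ → ℂ} {a b M : ℝ}
    (hg : ∀ w : ℂ, w.re < 0 → DifferentiableAt ℂ g w)
    (hinj : InjOn g {w | w.re < 0 ∧ a < w.im ∧ w.im < b})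
    (hM : ∀ w : ℂ, w.re < 0 → ‖g w‖ < M) (δ : ℝ) :
    ∫⁻ θ in Ioo a b, ∫⁻ u in Ioo (-δ) 0, ENNReal.ofReal (‖deriv g ⟨u, θ⟩‖ ^ 2) ≤
      volume (ball (0 : ℂ) M) := by
  set s : Set ℂ := measurableEquivRealProd ⁻¹' (Ioo (-δ) 0 ×ˢ Ioo a b) with hs
  have hms : MeasurableSet s :=
    measurableEquivRealProd.measurable (measurableSet_Ioo.prod measurableSet_Ioo)
  have hmem : ∀ w ∈ s, w.re < 0 ∧ a < w.im ∧ w.im < b := by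
    intro w hw
    have hw' : (w.re, w.im) ∈ Ioo (-δ) 0 ×ˢ Ioo a b := hw
    exact ⟨hw'.1.2, hw'.2.1, hw'.2.2⟩
  have hdet : ∀ c : ℂ, ((ContinuousLinearMap.toSpanSingleton ℂ c).restrictScalars ℝ).det =
      ‖c‖ ^ 2 := by
    intro c
    have h1 : LinearMap.det (Algebra.lmul ℝ ℂ c) = ‖c‖ ^ 2 := by
      rw [← Algebra.norm_apply, Algebra.norm_complex_apply, Complex.normSq_eq_norm_sq]
    rw [← h1, ContinuousLinearMap.det]
    congr 1
    ext <;> simp [mul_comm]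
  have harea := lintegral_abs_det_fderiv_eq_addHaar_image (volume : Measure ℂ) hms (f := g)
    (f' := fun w => (ContinuousLinearMap.toSpanSingleton ℂ (deriv g w)).restrictScalars ℝ)
    (fun w hw => ((hg w (hmem w hw).1).hasDerivAt.hasFDerivAt.restrictScalars ℝ).hasFDerivWithinAt)
    (hinj.mono hmem)
  have hle : volume (g '' s) ≤ volume (ball (0 : ℂ) M) := by
    apply measure_mono
    rintro _ ⟨w, hw, rfl⟩
    simpa using hM w (hmem w hw).1
  rw [← harea] at hle
  refine le_trans (le_of_eq ?_) hle
  simp only [hdet]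
  set F : ℝ × ℝ → ENNReal := fun q => ENNReal.ofReal (‖deriv g ⟨q.1, q.2⟩‖ ^ 2) with hF
  have hFm : Measurable F := by
    have h1 : Measurable (fun q : ℝ × ℝ => deriv g (measurableEquivRealProd.symm q)) :=
      (measurable_deriv g).comp measurableEquivRealProd.symm.measurable
    exact (h1.norm.pow_const 2).ennreal_ofReal
  have h2 := Complex.volume_preserving_equiv_real_prod.setLIntegral_comp_preimage
    (measurableSet_Ioo.prod measurableSet_Ioo : MeasurableSet (Ioo (-δ) 0 ×ˢ Ioo a b)) hFm
  have h3 : ∀ w : ℂ, F (measurableEquivRealProd w) = ENNReal.ofReal |‖deriv g w‖ ^ 2| := by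
    intro w
    rw [abs_of_nonneg (by positivity)]
    rfl
  simp only [h3] at h2
  rw [hs, h2, Measure.volume_eq_prod, setLIntegral_prod _ hFm.aemeasurable]
  exact lintegral_lintegral_swap (hFm.comp measurable_swap).aemeasurable

open MeasureTheory in
theorem strip_small {g : ℂ → ℂ} {a b M : ℝ} (hab : a < b)
    (hg : ∀ w : ℂ, w.re < 0 → DifferentiableAt ℂ g w)
    (hinj : InjOn g {w | w.re < 0 ∧ a < w.im ∧ w.im < b})
    (hM : ∀ w : ℂ, w.re < 0 → ‖g w‖ < M) (x : ℂ)
    (hx : ∀ θ ∈ Ioo a b, ∀ δ > 0, ∀ ε > 0, ∃ u ∈ Ioo (-δ) 0, ‖g ⟨u, θ⟩ - x‖ < ε) {η : ℝ}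
    (hη : 0 < η) : ∃ δ > 0, ∫ θ in a..b, ‖g ⟨-δ, θ⟩ - x‖ ≤ η := by
  have step1 : ∀ δ > 0, ∀ θ ∈ Ioo a b,
      ‖g ⟨-δ, θ⟩ - x‖ₑ ≤ ∫⁻ u in Ioo (-δ) 0, ‖deriv g ⟨u, θ⟩‖ₑ := by
    intro δ hδ θ hθ
    refine ENNReal.le_of_forall_pos_le_add fun ε hε _ => ?_
    obtain ⟨u, hu, hux⟩ := hx θ hθ δ hδ ε hε
    have hd : ∀ v ∈ uIcc (-δ) u, HasDerivAt (fun v : ℝ => g ⟨v, θ⟩) (deriv g ⟨v, θ⟩) v := by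
      intro v hv
      rw [uIcc_of_le hu.1.le] at hv
      have h1 : HasDerivAt g (deriv g ⟨v, θ⟩) ⟨v, θ⟩ := (hg _ (lt_of_le_of_lt hv.2 hu.2)).hasDerivAt
      have h2 : HasDerivAt (fun v : ℝ => ((v : ℂ) + θ * I)) 1 v :=
        (Complex.ofRealCLM.hasDerivAt (x := v)).add_const _
      have h3 : ∀ v : ℝ, ((v : ℂ) + θ * I) = ⟨v, θ⟩ := fun v => by apply Complex.ext <;> simp
      have h1' : HasDerivAt g (deriv g ⟨v, θ⟩) ((v : ℂ) + θ * I) := by rw [h3]; exact h1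
      have := h1'.comp v h2
      simpa [Function.comp_def, h3] using this
    have hcont : ContinuousOn (fun v : ℝ => deriv g ⟨v, θ⟩) (uIcc (-δ) u) := by
      have ho : IsOpen {w : ℂ | w.re < 0} := isOpen_lt Complex.continuous_re continuous_const
      have hdo : DifferentiableOn ℂ g {w : ℂ | w.re < 0} :=
        fun w hw => (hg w hw).differentiableWithinAt
      refine (hdo.deriv ho).continuousOn.comp (f := fun v : ℝ => (⟨v, θ⟩ : ℂ)) ?_ ?_
      · have h3 : (fun v : ℝ => (⟨v, θ⟩ : ℂ)) = fun v : ℝ => ((v : ℂ) + θ * I) := by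
          funext v; apply Complex.ext <;> simp
        rw [h3]; fun_prop
      · intro v hv
        rw [uIcc_of_le hu.1.le] at hv
        exact lt_of_le_of_lt hv.2 hu.2
    have hftc := intervalIntegral.integral_eq_sub_of_hasDerivAt hd hcont.intervalIntegrable
    have h4 : ‖g ⟨u, θ⟩ - g ⟨-δ, θ⟩‖ₑ ≤ ∫⁻ u in Ioo (-δ) 0, ‖deriv g ⟨u, θ⟩‖ₑ := by
      rw [← hftc, intervalIntegral.integral_of_le hu.1.le]
      refine (enorm_integral_le_lintegral_enorm _).trans ?_
      apply lintegral_mono_set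
      exact fun v hv => ⟨hv.1, lt_of_le_of_lt hv.2 hu.2⟩
    have h5 : g ⟨-δ, θ⟩ - x = (g ⟨u, θ⟩ - x) - (g ⟨u, θ⟩ - g ⟨-δ, θ⟩) := by ring
    rw [h5]
    refine (enorm_sub_le (E := ℂ)).trans ?_
    rw [add_comm]
    gcongr
    rw [enorm_eq_nnnorm]
    exact_mod_cast hux.le
  set A := volume (ball (0 : ℂ) M) with hA
  have hAtop : A < ⊤ := measure_ball_lt_top
  have step2 : ∀ lam > 0, ∀ δ > 0, ∫⁻ θ in Ioo a b, ‖g ⟨-δ, θ⟩ - x‖ₑ ≤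
      ENNReal.ofReal lam * A + ENNReal.ofReal ((1 / lam) * δ * (b - a)) := by
    intro lam hl δ hδ
    have hm : ∀ θ : ℝ, Measurable fun u : ℝ => ENNReal.ofReal (‖deriv g ⟨u, θ⟩‖ ^ 2) := by
      intro θ
      have h1 : Measurable (fun q : ℝ => deriv g (measurableEquivRealProd.symm (q, θ))) :=
        ((measurable_deriv g).comp measurableEquivRealProd.symm.measurable).comp
          measurable_prodMk_right
      exact (h1.norm.pow_const 2).ennreal_ofReal
    calc ∫⁻ θ in Ioo a b, ‖g ⟨-δ, θ⟩ - x‖ₑ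
        ≤ ∫⁻ θ in Ioo a b, ∫⁻ u in Ioo (-δ) 0, ‖deriv g ⟨u, θ⟩‖ₑ :=
          setLIntegral_mono' measurableSet_Ioo (step1 δ hδ)
      _ ≤ ∫⁻ θ in Ioo a b, ∫⁻ u in Ioo (-δ) 0, (ENNReal.ofReal lam *
            ENNReal.ofReal (‖deriv g ⟨u, θ⟩‖ ^ 2) + ENNReal.ofReal (1 / lam)) := by
          refine lintegral_mono fun θ => lintegral_mono fun u => ?_
          rw [← ENNReal.ofReal_mul hl.le, ← ENNReal.ofReal_add (by positivity) (by positivity),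
            ← ofReal_norm]
          apply ENNReal.ofReal_le_ofReal
          set y := ‖deriv g ⟨u, θ⟩‖ with hy
          have hy0 : 0 ≤ y := norm_nonneg _
          rcases le_total y (1 / lam) with h | h
          · have : 0 ≤ lam * y ^ 2 := by positivity
            linarith
          · have h1 : 1 ≤ lam * y := by rwa [div_le_iff₀' hl] at h
            have : 0 < 1 / lam := by positivity
            nlinarith
      _ = ∫⁻ θ in Ioo a b, (ENNReal.ofReal lam * (∫⁻ u in Ioo (-δ) 0,
            ENNReal.ofReal (‖deriv g ⟨u, θ⟩‖ ^ 2)) + ENNReal.ofReal (1 / lam * δ)) := by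
          refine lintegral_congr fun θ => ?_
          rw [lintegral_add_right _ measurable_const, lintegral_const_mul _ (hm θ),
            setLIntegral_const, Real.volume_Ioo, ← ENNReal.ofReal_mul (by positivity)]
          simp
      _ = ENNReal.ofReal lam * (∫⁻ θ in Ioo a b, (∫⁻ u in Ioo (-δ) 0,
            ENNReal.ofReal (‖deriv g ⟨u, θ⟩‖ ^ 2))) + ENNReal.ofReal ((1 / lam) * δ * (b - a)) := by
          rw [lintegral_add_right _ measurable_const, lintegral_const_mul' _ _ ENNReal.ofReal_ne_top,
            setLIntegral_const, Real.volume_Ioo, ← ENNReal.ofReal_mul (by positivity)]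
      _ ≤ _ := by
          gcongr
          exact strip_area hg hinj hM δ
  set lam := η / 2 / (A.toReal + 1) with hlam
  have hA0 : 0 ≤ A.toReal := ENNReal.toReal_nonneg
  have hlpos : 0 < lam := by positivity
  have hba : 0 < b - a := sub_pos.2 hab
  set δ := η / 2 * lam / (b - a) with hδ
  have hδpos : 0 < δ := by positivity
  refine ⟨δ, hδpos, ?_⟩
  have h1 := step2 lam hlpos δ hδpos
  have h2 : ENNReal.ofReal lam * A + ENNReal.ofReal ((1 / lam) * δ * (b - a)) ≤ ENNReal.ofReal η := by
    rw [← ENNReal.ofReal_toReal hAtop.ne, ← ENNReal.ofReal_mul hlpos.le,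
      ← ENNReal.ofReal_add (by positivity) (by positivity)]
    apply ENNReal.ofReal_le_ofReal
    have e1 : 1 / lam * δ * (b - a) = η / 2 := by
      rw [hδ]; field_simp
    have e2 : lam * A.toReal ≤ η / 2 := by
      rw [hlam, div_mul_eq_mul_div, div_le_iff₀ (by positivity)]
      nlinarith
    linarith
  have hcont : Continuous (fun θ : ℝ => g ⟨-δ, θ⟩ - x) := by
    have h3 : (fun θ : ℝ => g ⟨-δ, θ⟩ - x) = fun θ : ℝ => g ((-δ : ℝ) + θ * I) - x := by
      funext v; congr 2; apply Complex.ext <;> simp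
    rw [h3, continuous_iff_continuousAt]
    intro v
    refine ContinuousAt.sub ?_ continuousAt_const
    refine ContinuousAt.comp (g := g) ?_ (by fun_prop)
    exact (hg _ (by simpa using hδpos)).continuousAt
  have hIntg : IntegrableOn (fun θ : ℝ => g ⟨-δ, θ⟩ - x) (Ioo a b) :=
    (hcont.integrableOn_Icc (a := a) (b := b)).mono_set Ioo_subset_Icc_self
  rw [intervalIntegral.integral_of_le hab.le, integral_Ioc_eq_integral_Ioo]
  have h4 := ofReal_integral_norm_eq_lintegral_enorm hIntg
  rw [← ENNReal.ofReal_le_ofReal_iff hη.le, h4]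
  exact h1.trans h2

end JS


namespace JS

theorem koebe {f : ℂ → ℂ} {a b M : ℝ} {x : ℂ} (hab : a < b)
    (hf : DifferentiableOn ℂ f (ball 0 1)) (hinj : InjOn f (ball 0 1))
    (hM : ∀ z ∈ ball (0 : ℂ) 1, ‖f z‖ < M) (h0 : f 0 ≠ x)
    (hx : ∀ θ ∈ Ioo a b, ∀ δ > 0, ∀ ε > 0, ∃ u ∈ Ioo (-δ) (0 : ℝ), ‖f (exp ⟨u, θ⟩) - x‖ < ε) :
    False := by
  obtain ⟨n, hn⟩ := exists_nat_gt (max 1 (2 * Real.pi / (b - a)))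
  have hba : 0 < b - a := sub_pos.2 hab
  have hpi := Real.pi_pos
  have hn1 : (1 : ℝ) < n := lt_of_le_of_lt (le_max_left _ _) hn
  have hn2 : 2 * Real.pi / (b - a) < n := lt_of_le_of_lt (le_max_right _ _) hn
  set T : ℝ := 2 * Real.pi / (n + 1) with hT
  have hTpos : 0 < T := by positivity
  have hNT : ((n : ℝ) + 1) * T = 2 * Real.pi := by rw [hT]; field_simp
  have hTba : T ≤ b - a := by
    rw [div_lt_iff₀ hba] at hn2
    rw [hT, div_le_iff₀ (by positivity)]
    nlinarith
  have hT2 : T < 2 * Real.pi := by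
    rw [← hNT]; nlinarith
  have hball : ∀ w : ℂ, w.re < 0 → exp w ∈ ball (0 : ℂ) 1 := by
    intro w hw
    rw [mem_ball_zero_iff, Complex.norm_exp]
    exact Real.exp_lt_one_iff.2 hw
  set g : ℂ → ℂ := fun w => f (exp w) with hg
  have hgd : ∀ w : ℂ, w.re < 0 → DifferentiableAt ℂ g w := by
    intro w hw
    have h1 := (hf _ (hball w hw)).differentiableAt (isOpen_ball.mem_nhds (hball w hw))
    exact h1.comp w Complex.differentiableAt_exp
  have hgi : InjOn g {w | w.re < 0 ∧ a < w.im ∧ w.im < a + T} := by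
    intro w hw v hv hwv
    have h1 := hinj (hball w hw.1) (hball v hv.1) hwv
    rw [Complex.exp_eq_exp_iff_exists_int] at h1
    obtain ⟨k, hk⟩ := h1
    have h2 : w.im = v.im + k * (2 * Real.pi) := by
      rw [hk]; simp
    have hk0 : k = 0 := by
      have h3 : |(k : ℝ)| < 1 := by
        rw [abs_lt]
        have := hw.2.1; have := hw.2.2; have := hv.2.1; have := hv.2.2
        constructor <;> nlinarith
      have : |k| < 1 := by exact_mod_cast h3
      simpa using this
    rw [hk, hk0]; simp
  have hMpos : 0 < M := lt_of_le_of_lt (norm_nonneg _) (hM 0 (by simp))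
  set d := ‖f 0 - x‖ with hd
  have hdpos : 0 < d := norm_pos_iff.2 (sub_ne_zero.2 h0)
  set C := (M + ‖x‖) ^ n with hC
  have hCpos : 0 < C := by have := norm_nonneg x; positivity
  set η := Real.pi * d ^ (n + 1) / ((n + 1) * C) with hη
  have hηpos : 0 < η := by positivity
  obtain ⟨δ, hδ, hIntg⟩ := strip_small (g := g) (a := a) (b := a + T) (M := M) (by linarith) hgd hgi
    (fun w hw => hM _ (hball w hw)) x
    (fun θ hθ => hx θ ⟨hθ.1, by linarith [hθ.2]⟩) hηpos
  set P : ℝ → ℝ := fun θ => ∏ k ∈ Finset.range (n + 1), ‖g ⟨-δ, θ + k * T⟩ - x‖ with hP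
  have hgp : ∀ θ : ℝ, g ⟨-δ, θ + 2 * Real.pi⟩ = g ⟨-δ, θ⟩ := by
    intro θ
    simp only [hg]
    congr 1
    rw [Complex.exp_eq_exp_iff_exists_int]
    refine ⟨1, ?_⟩
    apply Complex.ext <;> simp
  have hmk : ∀ θ : ℝ, (⟨-δ, θ⟩ : ℂ) = (-δ : ℝ) + θ * I := by
    intro θ; apply Complex.ext <;> simp
  have hgc : Continuous (fun θ : ℝ => g ⟨-δ, θ⟩) := by
    rw [continuous_iff_continuousAt]
    intro v
    have h1 : (fun θ : ℝ => g ⟨-δ, θ⟩) = fun θ : ℝ => g ((-δ : ℝ) + θ * I) := by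
      funext v; rw [hmk]
    rw [h1]
    refine ContinuousAt.comp (g := g) ?_ (by fun_prop)
    exact (hgd _ (by simpa using hδ)).continuousAt
  have hPc : Continuous P := by
    refine continuous_finsetProd _ fun k _ => ?_
    exact ((hgc.comp (continuous_id.add continuous_const)).sub continuous_const).norm
  have hPper : Function.Periodic P T := by
    intro θ
    have e1 : P (θ + T) = ∏ k ∈ Finset.range (n + 1), ‖g ⟨-δ, θ + ((k + 1 : ℕ) : ℝ) * T⟩ - x‖ := by
      simp only [hP]
      refine Finset.prod_congr rfl fun k _ => ?_
      have : θ + T + k * T = θ + ((k + 1 : ℕ) : ℝ) * T := by push_cast; ring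
      rw [this]
    rw [e1, Finset.prod_range_succ]
    simp only [hP]
    rw [Finset.prod_range_succ' (fun k : ℕ => ‖g ⟨-δ, θ + k * T⟩ - x‖)]
    have e2 : θ + ((n + 1 : ℕ) : ℝ) * T = θ + 2 * Real.pi := by push_cast; rw [hNT]
    rw [e2, hgp]
    simp
  have hI1 : ∫ θ in (0:ℝ)..(2 * Real.pi), P θ = (n + 1) * ∫ θ in a..a + T, P θ := by
    have h1 := hPper.intervalIntegral_add_zsmul_eq ((n + 1 : ℕ) : ℤ) 0
      (fun _ _ => hPc.intervalIntegrable _ _)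
    rw [hPper.intervalIntegral_add_eq 0 a] at h1
    simp only [zsmul_eq_mul, zero_add] at h1
    push_cast at h1
    rw [hNT] at h1
    exact h1
  have hI2 : ∫ θ in a..a + T, P θ ≤ C * η := by
    calc ∫ θ in a..a + T, P θ ≤ ∫ θ in a..a + T, C * ‖g ⟨-δ, θ⟩ - x‖ := by
          apply intervalIntegral.integral_mono_on (by linarith) (hPc.intervalIntegrable _ _)
          · exact (continuous_const.mul (hgc.sub continuous_const).norm).intervalIntegrable _ _
          · intro θ _
            simp only [hP]
            rw [Finset.prod_range_succ' (fun k : ℕ => ‖g ⟨-δ, θ + k * T⟩ - x‖)]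
            simp only [Nat.cast_zero, zero_mul, add_zero]
            gcongr
            rw [hC]
            calc _ ≤ ∏ k ∈ Finset.range n, (M + ‖x‖) := by
                  refine Finset.prod_le_prod (fun _ _ => norm_nonneg _) fun k _ => ?_
                  refine (norm_sub_le _ _).trans ?_
                  gcongr
                  exact (hM _ (hball _ (by simpa using hδ))).le
              _ = _ := by simp
      _ = C * ∫ θ in a..a + T, ‖g ⟨-δ, θ⟩ - x‖ := by rw [intervalIntegral.integral_const_mul]
      _ ≤ _ := by gcongr
  set G : ℂ → ℂ := fun z => ∏ k ∈ Finset.range (n + 1), (f (exp (((k : ℝ) * T : ℝ) * I) * z) - x) with hG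
  set R := Real.exp (-δ) with hR
  have hRpos : 0 < R := Real.exp_pos _
  have hR1 : R < 1 := Real.exp_lt_one_iff.2 (by linarith)
  have hGd : DifferentiableOn ℂ G (ball 0 1) := by
    refine DifferentiableOn.fun_finsetProd fun k _ => ?_
    refine DifferentiableOn.sub_const ?_ x
    refine hf.comp (by fun_prop) ?_
    intro z hz
    rw [mem_ball_zero_iff] at hz ⊢
    rw [norm_mul, Complex.norm_exp_ofReal_mul_I, one_mul]; exact hz
  have hmv : Real.circleAverage G 0 R = G 0 := by
    apply DiffContOnCl.circleAverage
    apply DifferentiableOn.diffContOnCl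
    refine hGd.mono ?_
    rw [abs_of_pos hRpos, closure_ball _ hRpos.ne']
    exact closedBall_subset_ball hR1
  have hG0 : ‖G 0‖ = d ^ (n + 1) := by
    simp [hG, hd, Finset.prod_const, Finset.card_range]
  have hGn : ∀ θ : ℝ, ‖G (circleMap 0 R θ)‖ = P θ := by
    intro θ
    simp only [hG, hP, norm_prod]
    refine Finset.prod_congr rfl fun k _ => ?_
    simp only [hg]
    congr 3
    rw [circleMap_zero, hR, ofReal_exp, ← Complex.exp_add, ← Complex.exp_add]
    congr 1
    apply Complex.ext <;> simp
    ring
  rw [Real.circleAverage_def] at hmv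
  have h5 : d ^ (n + 1) ≤ (2 * Real.pi)⁻¹ * ∫ θ in (0:ℝ)..(2 * Real.pi), P θ := by
    rw [← hG0, ← hmv, norm_smul, Real.norm_of_nonneg (by positivity)]
    gcongr
    refine (intervalIntegral.norm_integral_le_integral_norm (by positivity)).trans ?_
    simp only [hGn]; exact le_rfl
  rw [hI1] at h5
  have h6 : ((n : ℝ) + 1) * (C * η) = Real.pi * d ^ (n + 1) := by
    rw [hη]; field_simp
  have h7 : d ^ (n + 1) ≤ (2 * Real.pi)⁻¹ * (((n : ℝ) + 1) * (C * η)) := by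
    refine h5.trans ?_
    gcongr
  rw [h6] at h7
  have h8 : (2 * Real.pi)⁻¹ * (Real.pi * d ^ (n + 1)) = d ^ (n + 1) / 2 := by field_simp
  rw [h8] at h7
  have : 0 < d ^ (n + 1) := by positivity
  linarith

/-- A connected set meeting two complementary sectors meets one of the two separating rays. -/
theorem sector {E : Set ℂ} (hE : IsPreconnected E) (h0 : (0 : ℂ) ∉ E) {θ₁ θ₂ : ℝ}
    {w₁ w₂ : ℂ} (h1 : exp w₁ ∈ E) (h2 : exp w₂ ∈ E) (ha : θ₁ < w₁.im) (hb : w₁.im < θ₂)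
    (hc : θ₂ < w₂.im) (hd : w₂.im < θ₁ + 2 * Real.pi) :
    ∃ w, exp w ∈ E ∧ (w.im = θ₁ ∨ w.im = θ₂) := by
  by_contra hcon
  push Not at hcon
  set A : Set ℂ := exp '' {w | θ₁ < w.im ∧ w.im < θ₂} with hA
  set B : Set ℂ := exp '' {w | θ₂ < w.im ∧ w.im < θ₁ + 2 * Real.pi} with hB
  have hopen : ∀ s t : ℝ, IsOpen (exp '' {w | s < w.im ∧ w.im < t}) := by
    intro s t
    refine Complex.isOpenMap_exp _ ?_
    exact (isOpen_lt continuous_const continuous_im).inter (isOpen_lt continuous_im continuous_const)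
  have hdis : Disjoint A B := by
    rw [Set.disjoint_left]
    rintro _ ⟨w, hw, rfl⟩ ⟨v, hv, hvw⟩
    rw [Complex.exp_eq_exp_iff_exists_int] at hvw
    obtain ⟨k, hk⟩ := hvw
    have h3 : v.im = w.im + k * (2 * Real.pi) := by rw [hk]; simp
    have hpi := Real.pi_pos
    have hk1 : (0 : ℝ) < k := by
      have := hw.2; have := hv.1; by_contra! h; nlinarith
    have hk2 : (k : ℝ) < 1 := by
      have := hw.1; have := hv.2; by_contra! h; nlinarith
    have hk3 : 0 < k := by exact_mod_cast hk1
    have hk4 : k < 1 := by exact_mod_cast hk2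
    omega
  have hsub : E ⊆ A ∪ B := by
    intro z hz
    have hz0 : z ≠ 0 := fun h => h0 (h ▸ hz)
    obtain ⟨m, hm, -⟩ := existsUnique_add_zsmul_mem_Ico Real.two_pi_pos (log z).im θ₁
    set w : ℂ := log z + m * (2 * Real.pi * I) with hw
    have hew : exp w = z := by
      rw [hw, Complex.exp_add, Complex.exp_log hz0, Complex.exp_int_mul_two_pi_mul_I, mul_one]
    have him : w.im = (log z).im + m • (2 * Real.pi) := by simp [hw]
    rw [← him] at hm
    have h3 := hcon w (hew ▸ hz)
    rcases lt_trichotomy w.im θ₂ with h | h | h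
    · exact Or.inl ⟨w, ⟨lt_of_le_of_ne hm.1 (Ne.symm h3.1), h⟩, hew⟩
    · exact absurd h h3.2
    · exact Or.inr ⟨w, ⟨h, hm.2⟩, hew⟩
  have h4 : E ⊆ A := hE.subset_left_of_subset_union (hopen _ _) (hopen _ _) hdis hsub
    ⟨_, h1, w₁, ⟨ha, hb⟩, rfl⟩
  exact Set.disjoint_left.1 hdis (h4 h2) ⟨w₂, ⟨hc, hd⟩, rfl⟩

end JS


namespace JS

structure Riem (U : Set ℂ) (φ f : ℂ → ℂ) : Prop where
  dφ : DifferentiableOn ℂ φ U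
  df : DifferentiableOn ℂ f (ball 0 1)
  mφ : MapsTo φ U (ball 0 1)
  mf : MapsTo f (ball 0 1) U
  lf : ∀ z ∈ U, f (φ z) = z
  rf : ∀ w ∈ ball (0 : ℂ) 1, φ (f w) = w

theorem riem_of_fam {U : Set ℂ} {p : ℂ} {φ : ℂ → ℂ} (hU : IsOpen U) (hφ : φ ∈ Fam U p)
    (him : φ '' U = ball 0 1) : ∃ f, Riem U φ f := by
  obtain ⟨hd, hinj, hn, -, hne⟩ := hφ
  set f := Function.invFunOn φ U with hf
  have hmf : MapsTo f (ball 0 1) U := by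
    intro w hw
    exact Function.invFunOn_mem (by rw [← him] at hw; exact hw)
  have hrf : ∀ w ∈ ball (0 : ℂ) 1, φ (f w) = w := by
    intro w hw
    exact Function.invFunOn_eq (by rw [← him] at hw; exact hw)
  have hmφ : MapsTo φ U (ball 0 1) := fun z hz => by rw [← him]; exact mem_image_of_mem _ hz
  have hlf : ∀ z ∈ U, f (φ z) = z := fun z hz =>
    hinj (hmf (hmφ hz)) hz (hrf _ (hmφ hz))
  refine ⟨f, hd, ?_, hmφ, hmf, hlf, hrf⟩
  intro w hw
  set z := f w with hz
  have hzU : z ∈ U := hmf hw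
  have hzw : φ z = w := hrf w hw
  have hstr : HasStrictDerivAt φ (deriv φ z) z :=
    (hd.analyticAt (hU.mem_nhds hzU)).hasStrictDerivAt
  have hmap := hstr.map_nhds_eq (hne z hzU)
  have hcont : ContinuousAt f w := by
    intro N hN
    rw [← hz] at hN
    rw [mem_map, ← hzw, ← hmap, mem_map]
    filter_upwards [hN, hU.mem_nhds hzU] with y hy hyU
    simpa [hlf y hyU] using hy
  have := HasDerivAt.of_local_left_inverse (f := φ) (g := f) (a := w) hcont hstr.hasDerivAt
    (hne z hzU) (by filter_upwards [isOpen_ball.mem_nhds hw] with y hy using hrf y hy)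
  exact this.differentiableAt.differentiableWithinAt

theorem Riem.boundary {U : Set ℂ} {φ f : ℂ → ℂ} (h : Riem U φ f) {x : ℂ} (hx : x ∉ U)
    {ρ : ℝ} (hρ : ρ < 1) : ∃ δ > 0, ∀ z ∈ U ∩ ball x δ, ρ < ‖φ z‖ := by
  have hK : IsCompact (f '' closedBall 0 ρ) :=
    (isCompact_closedBall _ _).image_of_continuousOn
      (h.df.continuousOn.mono (closedBall_subset_ball hρ))
  have hxK : x ∈ (f '' closedBall 0 ρ)ᶜ := by
    rintro ⟨w, hw, rfl⟩
    exact hx (h.mf (closedBall_subset_ball hρ hw))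
  obtain ⟨δ, hδ, hsub⟩ := Metric.isOpen_iff.1 hK.isClosed.isOpen_compl x hxK
  refine ⟨δ, hδ, fun z hz => ?_⟩
  by_contra! hcon
  exact hsub hz.2 ⟨φ z, by simpa using hcon, h.lf z hz.1⟩

theorem near_exp (α : ℝ) {τ : ℝ} (hτ : 0 < τ) :
    ∃ ε > 0, ∀ z, ‖z - exp (α * I)‖ < ε → ∃ w, exp w = z ∧ |w.im - α| < τ := by
  have ho : IsOpen (exp '' ball (α * I) τ) := Complex.isOpenMap_exp _ isOpen_ball
  obtain ⟨ε, hε, hsub⟩ := Metric.isOpen_iff.1 ho (exp (α * I)) ⟨_, mem_ball_self hτ, rfl⟩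
  refine ⟨ε, hε, fun z hz => ?_⟩
  obtain ⟨w, hw, rfl⟩ := hsub (mem_ball_iff_norm.2 hz)
  refine ⟨w, rfl, ?_⟩
  have h1 := Complex.abs_im_le_norm (w - α * I)
  rw [mem_ball_iff_norm] at hw
  simp at h1
  linarith

theorem two_angles {ζ ω : ℂ} (h1 : ‖ζ‖ = 1) (h2 : ‖ω‖ = 1) (hne : ζ ≠ ω) :
    ∃ α β : ℝ, α < β ∧ β < α + 2 * Real.pi ∧ ζ = exp (α * I) ∧ ω = exp (β * I) := by
  have key : ∀ z : ℂ, ‖z‖ = 1 → z = exp (arg z * I) := by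
    intro z hz
    have := Complex.norm_mul_exp_arg_mul_I z
    rw [hz] at this
    simpa using this.symm
  obtain ⟨m, hm, -⟩ := existsUnique_add_zsmul_mem_Ico Real.two_pi_pos (arg ω) (arg ζ)
  have hω : ω = exp (((arg ω + m • (2 * Real.pi) : ℝ) : ℂ) * I) := by
    conv_lhs => rw [key ω h2]
    rw [Complex.exp_eq_exp_iff_exists_int]
    refine ⟨-m, ?_⟩
    push_cast [zsmul_eq_mul]
    ring
  refine ⟨arg ζ, arg ω + m • (2 * Real.pi), lt_of_le_of_ne hm.1 ?_, hm.2, key ζ h1, hω⟩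
  intro h
  rw [← h, ← key ζ h1] at hω
  exact hne hω.symm

theorem Riem.limit {U J : Set ℂ} {γ : ℝ → ℂ} {φ f : ℂ → ℂ} (hJ : IsJ γ J) (hU : IsOpen U)
    (hc : IsPreconnected U) (hb : Bornology.IsBounded U) (hfr : frontier U = J)
    (h : Riem U φ f) {x : ℂ} (hx : x ∈ J) :
    ∃ ζ : ℂ, ‖ζ‖ = 1 ∧ Tendsto φ (𝓝[U] x) (𝓝 ζ) := by
  have hxfr : x ∈ frontier U := hfr ▸ hx
  have hxU : x ∉ U := by
    rw [hU.frontier_eq] at hxfr; exact hxfr.2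
  have hxcl : x ∈ closure U := frontier_subset_closure hxfr
  have : NeBot (𝓝[U] x) := mem_closure_iff_nhdsWithin_neBot.1 hxcl
  have hmem : closedBall (0 : ℂ) 1 ∈ map φ (𝓝[U] x) := by
    rw [mem_map]
    filter_upwards [self_mem_nhdsWithin] with z hz
    exact ball_subset_closedBall (h.mφ hz)
  have hclus : ∀ ζ : ℂ, ClusterPt ζ (map φ (𝓝[U] x)) → ∀ ε > 0, ∀ δ > 0,
      ∃ z ∈ U ∩ ball x δ, ‖φ z - ζ‖ < ε := by
    intro ζ hζ ε hε δ hδ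
    have h1 : φ '' (U ∩ ball x δ) ∈ map φ (𝓝[U] x) :=
      image_mem_map (inter_mem_nhdsWithin _ (ball_mem_nhds _ hδ))
    obtain ⟨_, hw, ⟨z, hz, rfl⟩⟩ := clusterPt_iff_nonempty.1 hζ (ball_mem_nhds ζ hε) h1
    exact ⟨z, hz, mem_ball_iff_norm.1 hw⟩
  have hnorm : ∀ ζ : ℂ, ζ ∈ closedBall (0 : ℂ) 1 → ClusterPt ζ (map φ (𝓝[U] x)) → ‖ζ‖ = 1 := by
    intro ζ hζ hcl
    refine le_antisymm (by simpa using hζ) ?_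
    by_contra! hlt
    obtain ⟨δ, hδ, hd⟩ := h.boundary hxU (ρ := (1 + ‖ζ‖) / 2) (by linarith)
    obtain ⟨z, hz, hz2⟩ := hclus ζ hcl ((1 - ‖ζ‖) / 2) (by linarith) δ hδ
    have h1 := hd z hz
    have h2 := norm_sub_norm_le (φ z) ζ
    linarith
  obtain ⟨ζ, hζ, hclζ⟩ := (isCompact_closedBall (0 : ℂ) 1).exists_clusterPt (le_principal_iff.2 hmem)
  refine ⟨ζ, hnorm ζ hζ hclζ, ?_⟩
  refine (isCompact_closedBall (0 : ℂ) 1).le_nhds_of_unique_clusterPt hmem ?_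
  intro ω hω hclω
  by_contra hne
  obtain ⟨α, β, hαβ, hβα, hα, hβ⟩ := two_angles (hnorm ζ hζ hclζ) (hnorm ω hω hclω) (Ne.symm hne)
  set τ := min (β - α) (α + 2 * Real.pi - β) / 3 with hτ
  have hτpos : 0 < τ := by
    have : 0 < min (β - α) (α + 2 * Real.pi - β) := lt_min (by linarith) (by linarith)
    positivity
  have ht1 : 3 * τ ≤ β - α := by
    have := min_le_left (β - α) (α + 2 * Real.pi - β); rw [hτ]; linarith
  have ht2 : 3 * τ ≤ α + 2 * Real.pi - β := by
    have := min_le_right (β - α) (α + 2 * Real.pi - β); rw [hτ]; linarith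
  let Q : ℝ → ℝ → Prop := fun r θ => ∃ u ∈ Ioo (-r) (0 : ℝ), ‖f (exp ⟨u, θ⟩) - x‖ < r
  have hQmono : ∀ r r' θ, r ≤ r' → Q r θ → Q r' θ := by
    rintro r r' θ hrr ⟨u, hu, hu2⟩
    exact ⟨u, ⟨by linarith [hu.1], hu.2⟩, hu2.trans_le hrr⟩
  have main : ∀ r > 0, (∀ θ ∈ Ioo (α + τ) (β - τ), Q r θ) ∨
      (∀ θ ∈ Ioo (β + τ) (α + 2 * Real.pi - τ), Q r θ) := by
    intro r hr
    by_contra hcon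
    push Not at hcon
    obtain ⟨⟨θ₂, hθ₂, hq2⟩, ⟨θ₁, hθ₁, hq1⟩⟩ := hcon
    obtain ⟨δ₀, hδ₀, hd0⟩ := h.boundary hxU (ρ := Real.exp (-r)) (Real.exp_lt_one_iff.2 (by linarith))
    obtain ⟨δ, hδ, hδ', hulc⟩ := hJ.ulc hU hc hb hfr hx (lt_min hr hδ₀)
    obtain ⟨ε₁, hε₁, he1⟩ := near_exp α hτpos
    obtain ⟨ε₂, hε₂, he2⟩ := near_exp β hτpos
    obtain ⟨z₁, hz₁, hzz₁⟩ := hclus ζ hclζ ε₁ hε₁ δ hδ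
    obtain ⟨z₂, hz₂, hzz₂⟩ := hclus ω hclω ε₂ hε₂ δ hδ
    obtain ⟨w₁, hw₁, hw₁'⟩ := he1 (φ z₁) (by rw [← hα]; exact hzz₁)
    obtain ⟨w₂, hw₂, hw₂'⟩ := he2 (φ z₂) (by rw [← hβ]; exact hzz₂)
    set C := connectedComponentIn (U ∩ ball x (min r δ₀)) z₁ with hC
    have hCsub : C ⊆ U ∩ ball x (min r δ₀) := connectedComponentIn_subset _ _
    have hz1C : z₁ ∈ C := hulc z₁ hz₁ z₁ hz₁
    have hz2C : z₂ ∈ C := hulc z₁ hz₁ z₂ hz₂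
    have hCd : ∀ z ∈ C, Real.exp (-r) < ‖φ z‖ := fun z hz =>
      hd0 z ⟨(hCsub hz).1, ball_subset_ball (min_le_right _ _) (hCsub hz).2⟩
    have hpre : IsPreconnected (φ '' C) :=
      isPreconnected_connectedComponentIn.image _
        (h.dφ.continuousOn.mono (hCsub.trans inter_subset_left))
    have h0 : (0 : ℂ) ∉ φ '' C := by
      rintro ⟨z, hz, hz0⟩
      have h1 := hCd z hz
      rw [hz0, norm_zero] at h1
      exact absurd h1 (not_lt.2 (Real.exp_pos _).le)
    have hQof : ∀ w, exp w ∈ φ '' C → Q r w.im := by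
      rintro w ⟨z, hz, hzw⟩
      have h1 := hCd z hz
      have h2 := h.mφ (hCsub hz).1
      rw [hzw, Complex.norm_exp, Real.exp_lt_exp] at h1
      rw [hzw, mem_ball_zero_iff, Complex.norm_exp, Real.exp_lt_one_iff] at h2
      refine ⟨w.re, ⟨h1, h2⟩, ?_⟩
      rw [Complex.eta, ← hzw, h.lf z (hCsub hz).1]
      exact lt_of_lt_of_le (mem_ball_iff_norm.1 (hCsub hz).2) (min_le_left _ _)
    rw [abs_lt] at hw₁' hw₂'
    obtain ⟨w, hwE, hwi⟩ := sector hpre h0 (θ₁ := θ₁ - 2 * Real.pi) (θ₂ := θ₂) (w₁ := w₁) (w₂ := w₂)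
      (hw₁ ▸ mem_image_of_mem _ hz1C) (hw₂ ▸ mem_image_of_mem _ hz2C)
      (by linarith [hθ₁.2, hw₁'.1]) (by linarith [hθ₂.1]) (by linarith [hθ₂.2])
      (by linarith [hθ₁.1])
    rcases hwi with hwi | hwi
    · have h3 : exp (w + 2 * Real.pi * I) ∈ φ '' C := by
        rw [Complex.exp_periodic]; exact hwE
      have h4 := hQof _ h3
      have h5 : (w + 2 * Real.pi * I).im = θ₁ := by simp [hwi]
      rw [h5] at h4
      exact hq1 h4
    · exact hq2 (hwi ▸ hQof w hwE)
  obtain ⟨M, hM⟩ := hb.exists_norm_le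
  have kill : ∀ a b : ℝ, a < b → (∀ r > 0, ∀ θ ∈ Ioo a b, Q r θ) → False := by
    intro a b hab hq
    refine koebe (f := f) (x := x) (M := M + 1) hab h.df ?_ ?_ ?_ ?_
    · intro w hw v hv hwv
      rw [← h.rf w hw, ← h.rf v hv, hwv]
    · intro z hz
      linarith [hM _ (h.mf hz)]
    · intro h0
      exact hxU (h0 ▸ h.mf (by simp))
    · intro θ hθ δ hδ ε hε
      obtain ⟨u, hu, hu2⟩ := hq (min δ ε) (lt_min hδ hε) θ hθ
      exact ⟨u, ⟨by linarith [hu.1, min_le_left δ ε], hu.2⟩, hu2.trans_le (min_le_right _ _)⟩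
  by_cases hcase : ∀ r > 0, ∀ θ ∈ Ioo (α + τ) (β - τ), Q r θ
  · exact kill _ _ (by linarith) hcase
  · push Not at hcase
    obtain ⟨r₀, hr₀, θ₀, hθ₀, hq0⟩ := hcase
    refine kill (β + τ) (α + 2 * Real.pi - τ) (by linarith) fun r hr θ hθ => ?_
    rcases main (min r r₀) (lt_min hr hr₀) with h1 | h1
    · exact absurd (hQmono _ _ _ (min_le_right _ _) (h1 θ₀ hθ₀)) hq0
    · exact hQmono _ _ _ (min_le_left _ _) (h1 θ hθ)

end JS


namespace JS

theorem bnd_arc {U J : Set ℂ} {γ : ℝ → ℂ} {φ f Φ : ℂ → ℂ} (hJ : IsJ γ J) (hU : IsOpen U)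
    (hb : Bornology.IsBounded U) (hfr : frontier U = J)
    (h : Riem U φ f) (hΦ : ContinuousOn Φ (closure U)) (heq : EqOn Φ φ U)
    {ζ : ℂ} (hζ : ‖ζ‖ = 1) {a b : ℝ} (hab : a < b) (hba : b < a + 2 * Real.pi)
    (ha : Φ (γ a) = ζ) (hb' : Φ (γ b) = ζ) :
    ∃ s t, s < t ∧ t < s + 2 * Real.pi ∧ ∀ u ∈ Ioo s t, Φ (γ u) = ζ := by
  by_contra hcon
  push Not at hcon
  obtain ⟨t₁, ht₁, hn1⟩ := hcon a b hab hba
  obtain ⟨t₂, ht₂, hn2⟩ := hcon b (a + 2 * Real.pi) hba (by linarith)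
  have hJcl : J ⊆ closure U := hfr ▸ frontier_subset_closure
  have hKc : IsCompact (closure U) := hb.isCompact_closure
  have hcl : ∀ s t : ℝ, IsCompact (γ '' Icc s t ∩ Φ ⁻¹' {ζ}) := by
    intro s t
    have h1 : ContinuousOn Φ (γ '' Icc s t) := hΦ.mono ((hJ.arc_subset _).trans hJcl)
    have h2 := h1.preimage_isClosed_of_isClosed (hJ.arc_compact s t).isClosed
      (isClosed_singleton (x := ζ))
    exact (hJ.arc_compact s t).of_isClosed_subset h2 inter_subset_left
  have hdis : Disjoint (γ '' Icc t₁ t₂ ∩ Φ ⁻¹' {ζ}) (γ '' Icc t₂ (t₁ + 2 * Real.pi) ∩ Φ ⁻¹' {ζ}) := by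
    rw [Set.disjoint_left]
    rintro _ ⟨⟨u, hu, rfl⟩, hz⟩ ⟨⟨v, hv, hvu⟩, -⟩
    have hz' : Φ (γ u) = ζ := hz
    rcases eq_or_lt_of_le hu.2 with e | e
    · exact hn2 (e ▸ hz')
    rcases eq_or_lt_of_le hu.1 with e1 | e1
    · exact hn1 (e1 ▸ hz')
    · exact hJ.arc_not_mem (lt_of_lt_of_le e hv.1) (by linarith [hv.2]) hvu.symm
  obtain ⟨O₁, O₂, hO₁, hO₂, hs1, hs2, hOd⟩ := SeparatedNhds.of_isCompact_isCompact (hcl _ _) (hcl _ _) hdis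
  have hcov : ∀ x ∈ J, Φ x = ζ → x ∈ O₁ ∪ O₂ := by
    intro x hx hxz
    obtain ⟨t, ht, rfl⟩ := hJ.exists_mem_Icc hx t₁
    rcases le_total t t₂ with h1 | h1
    · exact Or.inl (hs1 ⟨⟨t, ⟨ht.1, h1⟩, rfl⟩, hxz⟩)
    · exact Or.inr (hs2 ⟨⟨t, ⟨h1, ht.2.le⟩, rfl⟩, hxz⟩)
  -- distance from ζ on the rest
  have hrest : IsCompact (closure U \ (O₁ ∪ O₂)) := hKc.diff (hO₁.union hO₂)
  have hUn : ∀ z ∈ U, Φ z ≠ ζ := by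
    intro z hz e
    have := h.mφ hz
    rw [← heq hz, e, mem_ball_zero_iff, hζ] at this
    exact lt_irrefl _ this
  have hζn : ζ ∉ Φ '' (closure U \ (O₁ ∪ O₂)) := by
    rintro ⟨z, hz, hzz⟩
    by_cases hzU : z ∈ U
    · exact hUn z hzU hzz
    · refine hz.2 (hcov z ?_ hzz)
      rw [← hfr, hU.frontier_eq]; exact ⟨hz.1, hzU⟩
  have hcomp := hrest.image_of_continuousOn (hΦ.mono sdiff_subset)
  obtain ⟨r, hr, hrsub⟩ := Metric.isOpen_iff.1 hcomp.isClosed.isOpen_compl ζ hζn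
  set C := f '' (ball 0 1 ∩ ball ζ r) with hC
  have hCpre : IsPreconnected C := by
    refine IsPreconnected.image ?_ _ (h.df.continuousOn.mono inter_subset_left)
    exact ((convex_ball _ _).inter (convex_ball _ _)).isPreconnected
  have hCsub : C ⊆ O₁ ∪ O₂ := by
    rintro _ ⟨w, hw, rfl⟩
    by_contra hno
    have h1 : f w ∈ U := h.mf hw.1
    refine hrsub hw.2 ⟨f w, ⟨subset_closure h1, hno⟩, ?_⟩
    rw [heq h1, h.rf w hw.1]
  have hmeet : ∀ x ∈ J, Φ x = ζ → ∀ O, IsOpen O → x ∈ O → (C ∩ O).Nonempty := by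
    intro x hx hxz O hO hxO
    have hxc : x ∈ closure U := hJcl hx
    have : NeBot (𝓝[U] x) := mem_closure_iff_nhdsWithin_neBot.1 hxc
    have h1 : Tendsto Φ (𝓝[U] x) (𝓝 ζ) := by
      have := (hΦ x hxc).mono subset_closure
      rw [← hxz]; exact this
    have h2 := h1.eventually (ball_mem_nhds ζ hr)
    have h3 : ∀ᶠ z in 𝓝[U] x, z ∈ O := mem_nhdsWithin_of_mem_nhds (hO.mem_nhds hxO)
    obtain ⟨z, hz1, hz2, hz3⟩ := (h2.and (h3.and self_mem_nhdsWithin)).exists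
    refine ⟨z, ⟨φ z, ⟨h.mφ hz3, ?_⟩, h.lf z hz3⟩, hz2⟩
    rw [← heq hz3]; exact hz1
  have hm1 : (C ∩ O₁).Nonempty := hmeet (γ b) (hJ.mem b) hb' _ hO₁
    (hs1 ⟨⟨b, ⟨ht₁.2.le, ht₂.1.le⟩, rfl⟩, hb'⟩)
  have hm2 : (C ∩ O₂).Nonempty := by
    have e : γ (a + 2 * Real.pi) = γ a := hJ.per a
    refine hmeet (γ a) (hJ.mem a) ha _ hO₂ (hs2 ⟨⟨a + 2 * Real.pi, ⟨ht₂.2.le, ?_⟩, e⟩, ha⟩)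
    linarith [ht₁.1]
  obtain ⟨z, hz, hz'⟩ := hm2
  exact Set.disjoint_left.1 hOd (hCpre.subset_left_of_subset_union hO₁ hO₂ hOd hCsub hm1 hz) hz'

theorem no_const_arc {U J : Set ℂ} {γ : ℝ → ℂ} {φ f Φ : ℂ → ℂ} (hJ : IsJ γ J) (hU : IsOpen U)
    (hb : Bornology.IsBounded U) (hne : U.Nonempty) (hfr : frontier U = J)
    (h : Riem U φ f) (hΦ : ContinuousOn Φ (closure U)) (heq : EqOn Φ φ U)
    {ζ : ℂ} (hζ : ‖ζ‖ = 1) {s t : ℝ} (hst : s < t) (hts : t < s + 2 * Real.pi)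
    (hc : ∀ u ∈ Ioo s t, Φ (γ u) = ζ) : False := by
  set p := γ ((s + t) / 2) with hp
  have hpJ : p ∈ J := hJ.mem _
  have hpn : p ∉ γ '' Icc t (s + 2 * Real.pi) := by
    rintro ⟨u, hu, hup⟩
    exact hJ.arc_not_mem (s := (s + t) / 2) (t := u) (by linarith [hu.1]) (by linarith [hu.2]) hup.symm
  obtain ⟨δ, hδ, hδs⟩ := Metric.isOpen_iff.1 (hJ.arc_compact t (s + 2 * Real.pi)).isClosed.isOpen_compl p hpn
  have hΦζ : ∀ x ∈ J, x ∈ ball p δ → Φ x = ζ := by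
    intro x hx hxd
    obtain ⟨u, hu, rfl⟩ := hJ.exists_mem_Icc hx (s + 2 * Real.pi - 2 * Real.pi)
    rcases lt_or_ge u t with h1 | h1
    · rcases eq_or_lt_of_le hu.1 with e | e
      · refine absurd ?_ (hδs hxd)
        refine ⟨s + 2 * Real.pi, ⟨hts.le, le_rfl⟩, ?_⟩
        rw [hJ.per, ← e]; congr 1; ring
      · exact hc u ⟨by linarith, h1⟩
    · exact absurd ⟨u, ⟨h1, by linarith [hu.2]⟩, rfl⟩ (hδs hxd)
  have hpc : p ∈ closure U := by
    have : p ∈ frontier U := hfr ▸ hpJ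
    exact frontier_subset_closure this
  have hpv : p ∈ closure (closure U)ᶜ := by
    have : p ∈ frontier (closure U)ᶜ := (hJ.frontier_outside hU hb hne hfr) ▸ hpJ
    exact frontier_subset_closure this
  obtain ⟨c, hcU, hcp⟩ := Metric.mem_closure_iff.1 hpc (δ / 10) (by positivity)
  obtain ⟨q, hqV, hqp⟩ := Metric.mem_closure_iff.1 hpv (δ / 10) (by positivity)
  set R := ‖q - c‖ with hR
  have hRδ : R < δ / 5 := by
    rw [hR, ← dist_eq_norm]
    have := dist_triangle q p c
    rw [dist_comm q p] at this
    linarith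
  have hqc : q ≠ c := fun e => hqV (e ▸ subset_closure hcU)
  have hRpos : 0 < R := norm_pos_iff.2 (sub_ne_zero.2 hqc)
  have hVo : IsOpen (closure U)ᶜ := isClosed_closure.isOpen_compl
  have hnear : ∀ z, ‖z - c‖ ≤ R → ∀ u ∈ sphere (0 : ℂ) 1, c + u * (z - c) ∈ ball p δ := by
    intro z hz u hu
    have hu1 : ‖u‖ = 1 := by simpa using hu
    rw [mem_ball]
    have h1 : dist (c + u * (z - c)) c ≤ R := by
      rw [dist_eq_norm, add_sub_cancel_left, norm_mul, hu1, one_mul]; exact hz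
    have := dist_triangle (c + u * (z - c)) c p
    rw [dist_comm c p] at this
    linarith
  obtain ⟨F, hFs, hFc⟩ := (isCompact_sphere c R).elim_finite_subcover_image
    (b := sphere (0 : ℂ) 1) (c := fun u => {z | c + u * (z - c) ∈ (closure U)ᶜ})
    (fun u _ => hVo.preimage (by fun_prop))
    (by
      intro z hz
      have hz1 : ‖z - c‖ = R := mem_sphere_iff_norm.1 hz
      have hz0 : z - c ≠ 0 := by
        intro e; rw [e, norm_zero] at hz1; exact hRpos.ne hz1
      simp only [mem_iUnion]
      refine ⟨(q - c) / (z - c), ?_, ?_⟩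
      · rw [mem_sphere_zero_iff_norm, norm_div, hz1, ← hR, div_self hRpos.ne']
      · change c + (q - c) / (z - c) * (z - c) ∈ (closure U)ᶜ
        rw [div_mul_cancel₀ _ hz0, add_sub_cancel]; exact hqV)
  obtain ⟨hFfin, hFcov⟩ := hFc
  set F' := hFfin.toFinset with hF'
  have hF'm : ∀ u ∈ F', u ∈ sphere (0 : ℂ) 1 := fun u hu => hFs (hFfin.mem_toFinset.1 hu)
  set Ω : Set ℂ := {z | z ∈ ball c R ∧ ∀ u ∈ F', c + u * (z - c) ∈ U} with hΩ
  set G : ℂ → ℂ := fun z => ∏ u ∈ F', (Φ (c + u * (z - c)) - ζ) with hG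
  have hclΩ : closure Ω ⊆ {z | z ∈ closedBall c R ∧ ∀ u ∈ F', c + u * (z - c) ∈ closure U} := by
    refine closure_minimal ?_ ?_
    · exact fun z hz => ⟨ball_subset_closedBall hz.1, fun u hu => subset_closure (hz.2 u hu)⟩
    · have : {z | z ∈ closedBall c R ∧ ∀ u ∈ F', c + u * (z - c) ∈ closure U} =
          closedBall c R ∩ ⋂ u ∈ F', (fun z => c + u * (z - c)) ⁻¹' closure U := by
        ext z; simp
      rw [this]
      refine isClosed_closedBall.inter (isClosed_biInter fun u _ => ?_)
      exact isClosed_closure.preimage (by fun_prop)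
  have hΩo : IsOpen Ω := by
    have : Ω = ball c R ∩ ⋂ u ∈ F', (fun z => c + u * (z - c)) ⁻¹' U := by
      ext z; simp [hΩ]
    rw [this]
    refine isOpen_ball.inter (isOpen_biInter_finset fun u _ => ?_)
    exact hU.preimage (by fun_prop)
  have hΦd : DifferentiableOn ℂ Φ U := h.dφ.congr heq
  have hGd : DiffContOnCl ℂ G Ω := by
    constructor
    · refine DifferentiableOn.fun_finsetProd fun u hu => ?_
      refine DifferentiableOn.sub_const ?_ _
      exact hΦd.comp (by fun_prop) fun z hz => hz.2 u hu
    · refine continuousOn_finsetProd _ fun u hu => ?_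
      refine ContinuousOn.sub ?_ continuousOn_const
      exact hΦ.comp (by fun_prop) fun z hz => (hclΩ hz).2 u hu
  have hcΩ : c ∈ Ω := ⟨mem_ball_self hRpos, fun u _ => by simpa using hcU⟩
  have hbd : ∀ z ∈ frontier Ω, ‖G z‖ ≤ 0 := by
    intro z hz
    rw [hΩo.frontier_eq] at hz
    obtain ⟨hz1, hz2⟩ := hclΩ hz.1
    have hz1' : ‖z - c‖ ≤ R := mem_closedBall_iff_norm.1 hz1
    have hlt : ‖z - c‖ < R := by
      refine lt_of_le_of_ne hz1' fun e => ?_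
      have := hFcov (mem_sphere_iff_norm.2 e)
      simp only [mem_iUnion] at this
      obtain ⟨u, hu, hu2⟩ := this
      exact hu2 (hz2 u (hFfin.mem_toFinset.2 hu))
    have hex : ∃ u ∈ F', c + u * (z - c) ∉ U := by
      by_contra! hall
      exact hz.2 ⟨mem_ball_iff_norm.2 hlt, hall⟩
    obtain ⟨u, hu, huU⟩ := hex
    have hJm : c + u * (z - c) ∈ J := by
      rw [← hfr, hU.frontier_eq]; exact ⟨hz2 u hu, huU⟩
    have h0 := hΦζ _ hJm (hnear z hz1' u (hF'm u hu))
    have : G z = 0 := Finset.prod_eq_zero hu (sub_eq_zero.2 h0)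
    rw [this, norm_zero]
  have hΩb : Bornology.IsBounded Ω := isBounded_ball.subset (fun z hz => hz.1)
  have hGc := Complex.norm_le_of_forall_mem_frontier_norm_le hΩb hGd hbd (subset_closure hcΩ)
  have hGc0 : G c = 0 := norm_le_zero_iff.1 hGc
  rw [hG] at hGc0
  obtain ⟨u, hu, hu0⟩ := Finset.prod_eq_zero_iff.1 hGc0
  simp only [sub_self, mul_zero, add_zero] at hu0
  have h1 := h.mφ hcU
  rw [← heq hcU, sub_eq_zero.1 hu0, mem_ball_zero_iff, hζ] at h1
  exact lt_irrefl _ h1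

theorem caratheodory {U J : Set ℂ} {γ : ℝ → ℂ} (hJ : IsJ γ J) (hU : IsOpen U)
    (hc : IsPreconnected U) (hb : Bornology.IsBounded U) (hfr : frontier U = J)
    {p : ℂ} (hp : p ∈ U) :
    ∃ Φ : ℂ → ℂ, ContinuousOn Φ (closure U) ∧ BijOn Φ U (ball 0 1) ∧ BijOn Φ J (sphere 0 1) ∧
      Φ p = 0 := by
  have hne : U.Nonempty := ⟨p, hp⟩
  have hlog : LogDom U := logDom_of_compl hU ⟨hne, hc⟩ hb (hJ.compl_preconnected hU hb hne hfr)
  obtain ⟨φ, hφ, him⟩ := riemann_mapping hU hc hb hlog hp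
  obtain ⟨f, h⟩ := riem_of_fam hU hφ him
  have hcl : closure U = U ∪ J := by rw [← hfr, closure_eq_self_union_frontier]
  have hlimU : ∀ x ∈ U, Tendsto φ (𝓝[U] x) (𝓝 (φ x)) := fun x hx => h.dφ.continuousOn x hx
  have hlimJ : ∀ x ∈ J, ∃ ζ : ℂ, ‖ζ‖ = 1 ∧ Tendsto φ (𝓝[U] x) (𝓝 ζ) := fun x hx =>
    h.limit hJ hU hc hb hfr hx
  set Φ := extendFrom U φ with hΦ
  have hΦc : ContinuousOn Φ (closure U) := by
    refine continuousOn_extendFrom le_rfl fun x hx => ?_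
    rw [hcl] at hx
    rcases hx with hx | hx
    · exact ⟨_, hlimU x hx⟩
    · obtain ⟨ζ, -, hζ⟩ := hlimJ x hx; exact ⟨ζ, hζ⟩
  have heq : EqOn Φ φ U := fun x hx => extendFrom_eq (subset_closure hx) (hlimU x hx)
  have hJn : ∀ x ∈ J, ‖Φ x‖ = 1 := by
    intro x hx
    obtain ⟨ζ, h1, hζ⟩ := hlimJ x hx
    rw [hΦ, extendFrom_eq (hcl ▸ Or.inr hx) hζ, h1]
  have hUb : BijOn Φ U (ball 0 1) := by
    refine BijOn.congr ?_ heq.symm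
    exact ⟨h.mφ, hφ.2.1, him.ge⟩
  refine ⟨Φ, hΦc, hUb, ⟨?_, ?_, ?_⟩, ?_⟩
  · intro x hx; rw [mem_sphere_zero_iff_norm]; exact hJn x hx
  · intro x hx y hy hxy
    by_contra hne'
    obtain ⟨a, -, rfl⟩ := hJ.exists_mem_Icc hx 0
    obtain ⟨b, hb1, rfl⟩ := hJ.exists_mem_Icc hy a
    have hab : a < b := lt_of_le_of_ne hb1.1 fun e => hne' (by rw [e])
    obtain ⟨s, t, hst, hts, hcon⟩ := bnd_arc hJ hU hb hfr h hΦc heq (hJn _ hx) hab hb1.2 rfl hxy.symm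
    exact no_const_arc hJ hU hb hne hfr h hΦc heq (hJn _ hx) hst hts hcon
  · intro ζ hζ
    have hcomp : IsClosed (Φ '' closure U) :=
      (hb.isCompact_closure.image_of_continuousOn hΦc).isClosed
    have h1 : closure (ball (0 : ℂ) 1) ⊆ Φ '' closure U := by
      refine closure_minimal ?_ hcomp
      rw [← hUb.image_eq]; exact image_mono subset_closure
    rw [closure_ball _ one_ne_zero] at h1
    obtain ⟨z, hz, hzζ⟩ := h1 (sphere_subset_closedBall hζ)
    rw [hcl] at hz
    rcases hz with hz | hz
    · have h2 := hUb.mapsTo hz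
      rw [hzζ, mem_ball_zero_iff] at h2
      rw [mem_sphere_zero_iff_norm] at hζ
      exact absurd hζ h2.ne
    · exact ⟨z, hz, hzζ⟩
  · rw [heq hp]; exact hφ.2.2.2.1

end JS


namespace JS

/-- Uniformisation of the exterior, obtained by inversion. -/
theorem exterior {U J : Set ℂ} {γ : ℝ → ℂ} (hJ : IsJ γ J) (hU : IsOpen U)
    (hb : Bornology.IsBounded U) (hne : U.Nonempty) (hfr : frontier U = J) :
    ∃ Ψ : ℂ → ℂ, ContinuousOn Ψ Uᶜ ∧ BijOn Ψ (closure U)ᶜ (closedBall 0 1)ᶜ ∧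
      BijOn Ψ J (sphere 0 1) ∧ Tendsto (fun z => ‖Ψ z‖) (cocompact ℂ) atTop := by
  obtain ⟨p, hp⟩ := hne
  have hne : U.Nonempty := ⟨p, hp⟩
  set V := (closure U)ᶜ with hV
  have hVo : IsOpen V := isClosed_closure.isOpen_compl
  have hVp : IsPreconnected V := hJ.outside_preconnected hU hb hne hfr
  have hVf : frontier V = J := hJ.frontier_outside hU hb hne hfr
  have hVU : V ⊆ Uᶜ := compl_subset_compl.2 subset_closure
  have hJU : J ⊆ Uᶜ := by
    rw [← hfr, hU.frontier_eq]; exact fun z hz => hz.2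
  have hUc : Uᶜ = V ∪ J := by
    rw [hV, ← hfr, hU.frontier_eq]
    ext z
    have := @subset_closure _ _ U z
    simp only [mem_compl_iff, mem_union, Set.mem_sdiff]
    tauto
  have hJV : ∀ z ∈ J, z ∉ V := by
    intro z hz hzV
    rw [← hVf, hVo.frontier_eq] at hz; exact hz.2 hzV
  have hnp : ∀ z ∈ Uᶜ, z - p ≠ 0 := by
    intro z hz e
    rw [sub_eq_zero.1 e] at hz; exact hz hp
  set σ : ℂ → ℂ := fun z => (z - p)⁻¹ with hσ
  have hσc : ∀ z ∈ Uᶜ, ContinuousAt σ z := by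
    intro z hz
    exact (continuousAt_id.sub continuousAt_const).inv₀ (hnp z hz)
  have hσ0 : ∀ z ∈ Uᶜ, σ z ≠ 0 := fun z hz => inv_ne_zero (hnp z hz)
  have hσi : ∀ z, p + (σ z)⁻¹ = z := by intro z; simp [hσ]
  have hσr : ∀ w, σ (p + w⁻¹) = w := by intro w; simp [hσ]
  have hσinj : Function.Injective σ := fun z w e => by rw [← hσi z, e, hσi]
  set U' : Set ℂ := {w | w = 0 ∨ p + w⁻¹ ∈ V} with hU'
  have hpV : p ∉ V := fun h => hVU h hp
  have h0U' : (0 : ℂ) ∈ U' := Or.inl rfl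
  obtain ⟨R, hR⟩ := hb.subset_closedBall p
  have hR0 : 0 < max R 1 := lt_of_lt_of_le one_pos (le_max_right _ _)
  have hfar : ∀ z, max R 1 < ‖z - p‖ → z ∈ V := by
    intro z hz hzc
    have h1 := closure_minimal hR isClosed_closedBall hzc
    rw [mem_closedBall_iff_norm] at h1
    linarith [le_max_left R 1]
  have hnear0 : ball (0 : ℂ) (max R 1)⁻¹ ⊆ U' := by
    intro w hw
    by_cases hw0 : w = 0
    · exact Or.inl hw0
    · refine Or.inr (hfar _ ?_)
      rw [add_sub_cancel_left, norm_inv]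
      rw [mem_ball_zero_iff] at hw
      exact (lt_inv_comm₀ (norm_pos_iff.2 hw0) hR0).1 hw
  have hU'o : IsOpen U' := by
    rw [isOpen_iff_mem_nhds]
    intro w hw
    by_cases hw0 : w = 0
    · rw [hw0]
      exact mem_of_superset (ball_mem_nhds 0 (inv_pos.2 hR0)) hnear0
    · have hwV : p + w⁻¹ ∈ V := hw.resolve_left hw0
      have hc : ContinuousAt (fun w : ℂ => p + w⁻¹) w :=
        continuousAt_const.add (continuousAt_inv₀ hw0)
      filter_upwards [hc (hVo.mem_nhds hwV)] with v hv using Or.inr hv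
  have hσV : ∀ z ∈ V, σ z ∈ U' := fun z hz => Or.inr (by rw [hσi]; exact hz)
  have hU'V : ∀ w ∈ U', w ≠ 0 → ∃ z ∈ V, σ z = w := fun w hw hw0 =>
    ⟨p + w⁻¹, hw.resolve_left hw0, hσr w⟩
  have h0cl : (0 : ℂ) ∈ closure (σ '' V) := by
    rw [Metric.mem_closure_iff]
    intro ε hε
    set m := min ε (max R 1)⁻¹ / 2 with hm
    have hmin : 0 < min ε (max R 1)⁻¹ := lt_min hε (inv_pos.2 hR0)
    have hm0 : 0 < m := by positivity
    have hm1 : ‖(m : ℂ)‖ = m := by simp [abs_of_pos hm0]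
    have hmU : (m : ℂ) ∈ U' := by
      apply hnear0
      rw [mem_ball_zero_iff, hm1]
      have := min_le_right ε (max R 1)⁻¹
      rw [hm]; linarith
    obtain ⟨z, hz, hzm⟩ := hU'V _ hmU (by exact_mod_cast hm0.ne')
    refine ⟨m, ⟨z, hz, hzm⟩, ?_⟩
    rw [dist_zero_left, hm1]
    have := min_le_left ε (max R 1)⁻¹
    rw [hm]; linarith
  have hU'p : IsPreconnected U' := by
    have h1 : IsPreconnected (σ '' V) :=
      hVp.image _ fun z hz => (hσc z (hVU hz)).continuousWithinAt
    refine h1.subset_closure (by rintro _ ⟨z, hz, rfl⟩; exact hσV z hz) ?_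
    intro w hw
    by_cases hw0 : w = 0
    · rw [hw0]; exact h0cl
    · obtain ⟨z, hz, rfl⟩ := hU'V w hw hw0
      exact subset_closure ⟨z, hz, rfl⟩
  obtain ⟨r, hr, hrU⟩ := Metric.isOpen_iff.1 hU p hp
  have hU'b : Bornology.IsBounded U' := by
    refine (isBounded_closedBall (x := (0 : ℂ)) (r := r⁻¹)).subset ?_
    intro w hw
    by_cases hw0 : w = 0
    · rw [hw0]; exact mem_closedBall_self (inv_pos.2 hr).le
    · obtain ⟨z, hz, rfl⟩ := hU'V w hw hw0
      rw [mem_closedBall_zero_iff, hσ, norm_inv]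
      apply inv_anti₀ hr
      by_contra! hlt
      exact hVU hz (hrU (mem_ball_iff_norm.2 hlt))
  have hJ' : IsJ (σ ∘ γ) (σ '' J) := by
    refine ⟨?_, ?_, ?_, ?_⟩
    · rw [continuous_iff_continuousAt]
      intro t
      exact ContinuousAt.comp (hσc _ (hJU (hJ.mem t))) hJ.cont.continuousAt
    · intro t; simp [hJ.per]
    · intro s t hst; exact hJ.inj s t (hσinj hst)
    · rw [range_comp, hJ.rng]
  have hfr' : frontier U' = σ '' J := by
    rw [hU'o.frontier_eq]
    apply Subset.antisymm
    · rintro w ⟨hwc, hwU⟩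
      have hw0 : w ≠ 0 := fun e => hwU (Or.inl e)
      have hwV : p + w⁻¹ ∉ V := fun e => hwU (Or.inr e)
      refine ⟨p + w⁻¹, ?_, hσr w⟩
      rw [← hVf, hVo.frontier_eq]
      refine ⟨?_, hwV⟩
      rw [mem_closure_iff_nhds]
      intro N hN
      have hc : ContinuousAt (fun w : ℂ => p + w⁻¹) w :=
        continuousAt_const.add (continuousAt_inv₀ hw0)
      have h1 := inter_mem (mem_map.1 (hc hN)) (isOpen_ne.mem_nhds hw0)
      obtain ⟨v, ⟨hv1, hv2⟩, hvU⟩ := mem_closure_iff_nhds.1 hwc _ h1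
      exact ⟨p + v⁻¹, hv1, hvU.resolve_left hv2⟩
    · rintro _ ⟨z, hz, rfl⟩
      refine ⟨?_, ?_⟩
      · have hzc : z ∈ closure V := by
          rw [← hVf] at hz; exact frontier_subset_closure hz
        rw [mem_closure_iff_nhds]
        intro N hN
        obtain ⟨v, hv1, hv2⟩ := mem_closure_iff_nhds.1 hzc _ (hσc z (hJU hz) hN)
        exact ⟨σ v, hv1, hσV v hv2⟩
      · rintro (h | h)
        · exact hσ0 z (hJU hz) h
        · rw [hσi] at h; exact hJV z hz h
  obtain ⟨Φ, hΦc, hΦU, hΦJ, hΦ0⟩ := caratheodory hJ' hU'o hU'p hU'b hfr' h0U'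
  have hclU' : closure U' = U' ∪ σ '' J := by rw [← hfr', closure_eq_self_union_frontier]
  have hmem : ∀ z ∈ Uᶜ, σ z ∈ closure U' := by
    intro z hz
    rw [hUc] at hz; rw [hclU']
    rcases hz with hz | hz
    · exact Or.inl (hσV z hz)
    · exact Or.inr ⟨z, hz, rfl⟩
  have hΦn : ∀ z ∈ Uᶜ, Φ (σ z) ≠ 0 := by
    intro z hz e
    have hz' := hz
    rw [hUc] at hz
    rcases hz with hz | hz
    · exact hσ0 z hz' (hΦU.injOn (hσV z hz) h0U' (e.trans hΦ0.symm))
    · have := hΦJ.mapsTo (mem_image_of_mem σ hz)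
      rw [e] at this; simp at this
  refine ⟨fun z => (Φ (σ z))⁻¹, ?_, ⟨?_, ?_, ?_⟩, ⟨?_, ?_, ?_⟩, ?_⟩
  · refine ContinuousOn.inv₀ ?_ hΦn
    exact hΦc.comp (fun z hz => (hσc z hz).continuousWithinAt) hmem
  · intro z hz
    have h1 := hΦU.mapsTo (hσV z hz)
    rw [mem_ball_zero_iff] at h1
    rw [mem_compl_iff, mem_closedBall_zero_iff, norm_inv, not_le]
    exact (one_lt_inv₀ (norm_pos_iff.2 (hΦn z (hVU hz)))).2 h1
  · intro z hz w hw hzw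
    exact hσinj (hΦU.injOn (hσV z hz) (hσV w hw) (inv_injective hzw))
  · intro v hv
    rw [mem_compl_iff, mem_closedBall_zero_iff, not_le] at hv
    have hv0 : v ≠ 0 := by rintro rfl; simp at hv; linarith
    have h1 : v⁻¹ ∈ ball (0 : ℂ) 1 := by
      rw [mem_ball_zero_iff, norm_inv]; exact inv_lt_one_of_one_lt₀ hv
    obtain ⟨w, hw, hwv⟩ := hΦU.surjOn h1
    have hw0 : w ≠ 0 := by
      rintro rfl
      rw [hΦ0] at hwv; exact inv_ne_zero hv0 hwv.symm
    obtain ⟨z, hz, rfl⟩ := hU'V w hw hw0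
    refine ⟨z, hz, ?_⟩
    change (Φ (σ z))⁻¹ = v
    rw [hwv, inv_inv]
  · intro z hz
    have h1 := hΦJ.mapsTo (mem_image_of_mem σ hz)
    rw [mem_sphere_zero_iff_norm] at h1 ⊢
    rw [norm_inv, h1, inv_one]
  · intro z hz w hw hzw
    exact hσinj (hΦJ.injOn (mem_image_of_mem σ hz) (mem_image_of_mem σ hw) (inv_injective hzw))
  · intro v hv
    rw [mem_sphere_zero_iff_norm] at hv
    have h1 : v⁻¹ ∈ sphere (0 : ℂ) 1 := by
      rw [mem_sphere_zero_iff_norm, norm_inv, hv, inv_one]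
    obtain ⟨_, ⟨z, hz, rfl⟩, hwv⟩ := hΦJ.surjOn h1
    refine ⟨z, hz, ?_⟩
    change (Φ (σ z))⁻¹ = v
    rw [hwv, inv_inv]
  · have hσt : Tendsto σ (cocompact ℂ) (𝓝 0) := by
      rw [tendsto_zero_iff_norm_tendsto_zero]
      have h1 : Tendsto (fun z : ℂ => ‖z - p‖) (cocompact ℂ) atTop := by
        have h2 : Tendsto (fun z : ℂ => ‖z‖ - ‖p‖) (cocompact ℂ) atTop :=
          tendsto_atTop_add_const_right _ _ (tendsto_norm_cocompact_atTop)
        exact tendsto_atTop_mono (fun z => norm_sub_norm_le z p) h2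
      have h3 := tendsto_inv_atTop_zero.comp h1
      refine h3.congr fun z => ?_
      simp [hσ]
    have hev : ∀ᶠ z in cocompact ℂ, z ∈ Uᶜ := by
      filter_upwards [hb.isCompact_closure.compl_mem_cocompact] with z hz using hVU hz
    have hΦt : Tendsto (fun z => ‖Φ (σ z)‖) (cocompact ℂ) (𝓝[>] 0) := by
      rw [tendsto_nhdsWithin_iff]
      refine ⟨?_, ?_⟩
      · have h1 : ContinuousAt Φ 0 :=
          (hΦc 0 (subset_closure h0U')).continuousAt
            (mem_of_superset (hU'o.mem_nhds h0U') subset_closure)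
        have h2 := (h1.tendsto.comp hσt).norm
        rw [hΦ0, norm_zero] at h2
        exact h2
      · filter_upwards [hev] with z hz
        exact norm_pos_iff.2 (hΦn z hz)
    refine (tendsto_inv_nhdsGT_zero.comp hΦt).congr fun z => ?_
    simp

theorem main {U J : Set ℂ} {γ : ℝ → ℂ} (hJ : IsJ γ J) (hU : IsOpen U)
    (hc : IsPreconnected U) (hb : Bornology.IsBounded U) (hne : U.Nonempty) (hfr : frontier U = J) :
    ∃ g : ℂ ≃ₜ ℂ, g '' U = ball (0 : ℂ) 1 ∧ g '' (closure U)ᶜ = (closedBall (0 : ℂ) 1)ᶜ := by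
  obtain ⟨p, hp⟩ := hne
  obtain ⟨Φ, hΦc, hΦU, hΦJ, -⟩ := caratheodory hJ hU hc hb hfr hp
  obtain ⟨Ψ, hΨc, hΨV, hΨJ, hΨt⟩ := exterior hJ hU hb ⟨p, hp⟩ hfr
  have hcl : closure U = U ∪ J := by rw [← hfr, closure_eq_self_union_frontier]
  have hJd : J = closure U \ U := by rw [← hfr, hU.frontier_eq]
  have hJcl : J ⊆ closure U := by rw [hcl]; exact subset_union_right
  have hJUc : J ⊆ Uᶜ := by rw [hJd]; exact fun z hz => hz.2
  have hVUc : (closure U)ᶜ ⊆ Uᶜ := compl_subset_compl.2 subset_closure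
  set h : ℂ → ℂ := fun w => Φ (Function.invFunOn Ψ J w) with hh
  have hhΨ : ∀ t ∈ J, h (Ψ t) = Φ t := by
    intro t ht
    simp only [hh]
    rw [hΨJ.injOn.leftInvOn_invFunOn ht]
  have hhc : ContinuousOn h (sphere 0 1) := by
    rw [← hΨJ.image_eq]
    exact continuousOn_of_comp_compact hJ.compact (hΨc.mono hJUc) (hΦc.mono hJcl) hhΨ
  have hhb : BijOn h (sphere 0 1) (sphere 0 1) := by
    refine ⟨?_, ?_, ?_⟩
    · intro w hw
      obtain ⟨t, ht, rfl⟩ := hΨJ.surjOn hw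
      rw [hhΨ t ht]; exact hΦJ.mapsTo ht
    · intro w hw v hv hwv
      obtain ⟨t, ht, rfl⟩ := hΨJ.surjOn hw
      obtain ⟨s, hs, rfl⟩ := hΨJ.surjOn hv
      rw [hhΨ t ht, hhΨ s hs] at hwv
      rw [hΦJ.injOn ht hs hwv]
    · intro w hw
      obtain ⟨t, ht, rfl⟩ := hΦJ.surjOn hw
      exact ⟨Ψ t, hΨJ.mapsTo ht, hhΨ t ht⟩
  have hΨn : ∀ z ∈ Uᶜ, 1 ≤ ‖Ψ z‖ := by
    intro z hz
    by_cases hzc : z ∈ closure U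
    · have := hΨJ.mapsTo (hJd ▸ ⟨hzc, hz⟩ : z ∈ J)
      rw [mem_sphere_zero_iff_norm] at this; exact this.ge
    · have := hΨV.mapsTo hzc
      rw [mem_compl_iff, mem_closedBall_zero_iff, not_le] at this; exact this.le
  have hΨpos : ∀ z ∈ Uᶜ, 0 < ‖Ψ z‖ := fun z hz => lt_of_lt_of_le one_pos (hΨn z hz)
  set dir : ℂ → ℂ := fun z => Ψ z / (‖Ψ z‖ : ℂ) with hdir
  have hdirm : ∀ z ∈ Uᶜ, dir z ∈ sphere (0 : ℂ) 1 := by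
    intro z hz
    have := hΨpos z hz
    rw [mem_sphere_zero_iff_norm, hdir, norm_div, Complex.norm_real, norm_norm, div_self this.ne']
  set A : ℂ → ℂ := fun z => (‖Ψ z‖ : ℂ) * h (dir z) with hA
  have hAc : ContinuousOn A Uᶜ := by
    have h1 : ContinuousOn (fun z => (‖Ψ z‖ : ℂ)) Uᶜ :=
      Complex.continuous_ofReal.comp_continuousOn hΨc.norm
    refine h1.mul (hhc.comp (hΨc.div h1 ?_) hdirm)
    intro z hz
    exact_mod_cast (hΨpos z hz).ne'
  have hAn : ∀ z ∈ Uᶜ, ‖A z‖ = ‖Ψ z‖ := by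
    intro z hz
    have h1 := hhb.mapsTo (hdirm z hz)
    rw [mem_sphere_zero_iff_norm] at h1
    rw [hA, norm_mul, h1, Complex.norm_real, norm_norm, mul_one]
  have hAJ : ∀ z ∈ J, A z = Φ z := by
    intro z hz
    have h1 := hΨJ.mapsTo hz
    rw [mem_sphere_zero_iff_norm] at h1
    simp only [hA, hdir, h1]
    simp [hhΨ z hz]
  obtain ⟨g, hgc, hg1, hg2⟩ := continuousOn_glue hΦc hAc isClosed_closure hU.isClosed_compl
    (fun z hz => (hAJ z (hJd ▸ ⟨hz.1, hz.2⟩)).symm)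
  have hun : closure U ∪ Uᶜ = univ := by
    rw [eq_univ_iff_forall]; intro z
    by_cases hz : z ∈ U
    · exact Or.inl (subset_closure hz)
    · exact Or.inr hz
  rw [hun, continuousOn_univ] at hgc
  have hgU : BijOn g U (ball 0 1) := hΦU.congr fun z hz => (hg1 z (subset_closure hz)).symm
  have hgJ : BijOn g J (sphere 0 1) := hΦJ.congr fun z hz => (hg1 z (hJcl hz)).symm
  have hAV : BijOn A (closure U)ᶜ (closedBall 0 1)ᶜ := by
    refine ⟨?_, ?_, ?_⟩
    · intro z hz
      have h1 := hΨV.mapsTo hz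
      rw [mem_compl_iff, mem_closedBall_zero_iff] at h1 ⊢
      rwa [hAn z (hVUc hz)]
    · intro z hz w hw hzw
      have hn : ‖Ψ z‖ = ‖Ψ w‖ := by
        rw [← hAn z (hVUc hz), ← hAn w (hVUc hw), hzw]
      have hz0 : (‖Ψ z‖ : ℂ) ≠ 0 := by exact_mod_cast (hΨpos z (hVUc hz)).ne'
      simp only [hA] at hzw
      rw [← hn] at hzw
      have h2 := hhb.injOn (hdirm z (hVUc hz)) (hdirm w (hVUc hw)) (mul_left_cancel₀ hz0 hzw)
      simp only [hdir] at h2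
      rw [← hn] at h2
      exact hΨV.injOn hz hw ((div_left_inj' hz0).1 h2)
    · intro w hw
      have hw1 : 1 < ‖w‖ := by
        rw [mem_compl_iff, mem_closedBall_zero_iff, not_le] at hw; exact hw
      have hw0 : (‖w‖ : ℂ) ≠ 0 := by
        have : ‖w‖ ≠ 0 := by linarith
        exact_mod_cast this
      have hwd : w / (‖w‖ : ℂ) ∈ sphere (0 : ℂ) 1 := by
        rw [mem_sphere_zero_iff_norm, norm_div, Complex.norm_real, norm_norm,
          div_self (by linarith)]
      obtain ⟨ζ, hζ, hζw⟩ := hhb.surjOn hwd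
      have hζ1 : ‖ζ‖ = 1 := mem_sphere_zero_iff_norm.1 hζ
      have hn : ‖(‖w‖ : ℂ) * ζ‖ = ‖w‖ := by
        rw [norm_mul, hζ1, Complex.norm_real, norm_norm, mul_one]
      have hv : (‖w‖ : ℂ) * ζ ∈ (closedBall (0 : ℂ) 1)ᶜ := by
        rw [mem_compl_iff, mem_closedBall_zero_iff, hn, not_le]; exact hw1
      obtain ⟨z, hz, hzv⟩ := hΨV.surjOn hv
      refine ⟨z, hz, ?_⟩
      simp only [hA, hdir, hzv, hn]
      rw [mul_div_cancel_left₀ _ hw0, hζw, mul_div_cancel₀ _ hw0]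
  have hgV : BijOn g (closure U)ᶜ (closedBall 0 1)ᶜ :=
    hAV.congr fun z hz => (hg2 z (hVUc hz)).symm
  have hcase : ∀ z, z ∈ U ∨ z ∈ J ∨ z ∈ (closure U)ᶜ := by
    intro z
    by_cases hz : z ∈ closure U
    · rw [hcl] at hz; rcases hz with hz | hz
      · exact Or.inl hz
      · exact Or.inr (Or.inl hz)
    · exact Or.inr (Or.inr hz)
  have nU : ∀ z ∈ U, ‖g z‖ < 1 := fun z hz => mem_ball_zero_iff.1 (hgU.mapsTo hz)
  have nJ : ∀ z ∈ J, ‖g z‖ = 1 := fun z hz => mem_sphere_zero_iff_norm.1 (hgJ.mapsTo hz)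
  have nV : ∀ z ∈ (closure U)ᶜ, 1 < ‖g z‖ := fun z hz => by
    have := hgV.mapsTo hz
    rwa [mem_compl_iff, mem_closedBall_zero_iff, not_le] at this
  have hinj : Function.Injective g := by
    intro z w e
    have en : ‖g z‖ = ‖g w‖ := by rw [e]
    rcases hcase z with hz | hz | hz <;> rcases hcase w with hw | hw | hw
    · exact hgU.injOn hz hw e
    · linarith [nU z hz, nJ w hw]
    · linarith [nU z hz, nV w hw]
    · linarith [nJ z hz, nU w hw]
    · exact hgJ.injOn hz hw e
    · linarith [nJ z hz, nV w hw]
    · linarith [nV z hz, nU w hw]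
    · linarith [nV z hz, nJ w hw]
    · exact hgV.injOn hz hw e
  have hsurj : Function.Surjective g := by
    intro w
    rcases lt_trichotomy ‖w‖ 1 with hw | hw | hw
    · obtain ⟨z, -, hz⟩ := hgU.surjOn (mem_ball_zero_iff.2 hw); exact ⟨z, hz⟩
    · obtain ⟨z, -, hz⟩ := hgJ.surjOn (mem_sphere_zero_iff_norm.2 hw); exact ⟨z, hz⟩
    · obtain ⟨z, -, hz⟩ := hgV.surjOn (by
        rw [mem_compl_iff, mem_closedBall_zero_iff, not_le]; exact hw : w ∈ (closedBall (0 : ℂ) 1)ᶜ)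
      exact ⟨z, hz⟩
  have hgt : Tendsto g (cocompact ℂ) (cocompact ℂ) := by
    rw [← Metric.cobounded_eq_cocompact, ← tendsto_norm_atTop_iff_cobounded,
      Metric.cobounded_eq_cocompact]
    refine hΨt.congr' ?_
    filter_upwards [hb.isCompact_closure.compl_mem_cocompact] with z hz
    rw [hg2 z (hVUc hz), hAn z (hVUc hz)]
  have hprop : IsProperMap g := isProperMap_iff_tendsto_cocompact.2 ⟨hgc, hgt⟩
  refine ⟨(Equiv.ofBijective g ⟨hinj, hsurj⟩).toHomeomorphOfContinuousClosed hgc hprop.isClosedMap,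
    hgU.image_eq, hgV.image_eq⟩

end JS

theorem jordan_schoenflies (U : Set ℂ) (hU : IsOpen U)
    (e : Metric.sphere (0 : ℂ) 1 → ℂ) (he : Topology.IsEmbedding e)
    (hfront : frontier U = Set.range e)
    (hbdd : Bornology.IsBounded U)
    (hcomp : ∃ z₀ ∈ (Set.range e)ᶜ, U = connectedComponentIn (Set.range e)ᶜ z₀) :
    ∃ g : ℂ ≃ₜ ℂ, g '' U = Metric.ball (0 : ℂ) 1 ∧
      g '' (closure U)ᶜ = (Metric.closedBall (0 : ℂ) 1)ᶜ := by
  obtain ⟨z₀, hz₀, hUz⟩ := hcomp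
  obtain ⟨γ, hγ⟩ := JS.isJ_of_embedding he
  refine JS.main hγ hU ?_ hbdd ?_ hfront
  · rw [hUz]; exact isPreconnected_connectedComponentIn
  · rw [hUz]; exact ⟨z₀, mem_connectedComponentIn hz₀⟩
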